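/- Let Ω ⊆ ℂⁿ be a convex domain and τ a holomorphic automorphism of Ω. Then there exists a universal function for τ, i.e. a holomorphic function F : Ω → ℂ such that {F ∘ τʲ : j ≥ 1} is dense in 𝒪(Ω) with respect to the compact-open topology, if and only if τ is a generalized translation, i.e. for every compact 𝒪(Ω)-convex set K ⊆ Ω there exists j ≥ 1 such that τʲ(K) ∩ K = ∅ and τʲ(K) ∪ K is 𝒪(Ω)-convex. -/

import Mathlib

/-!
Suppose that `τʲ(K)` and `K` are disjoint and that their union is `𝒪(Ω)`-convex. By Hadamard's lemma
every character of `𝒪(Ω)` is the evaluation at a point of `Ω`, so every character of the uniform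
closure of `𝒪(Ω)` on `τʲ(K) ∪ K` is the evaluation at a point of this union. Shilov's idempotent
theorem then puts the indicator function of `K` into the uniform closure. Hence one holomorphic
function can approximate one given function on `K` and another on `τʲ(K)`, which is the
transitivity that Birkhoff's Baire category criterion needs to produce a universal function.

Conversely, let `F` be universal and let `c` be large compared with `F` on `K`. If `F ∘ τʲ` is
close to `c` on `K`, then `F / c` is small on `K` and close to `1` on `τʲ(K)`. Iterating
`z ↦ 3 z² - 2 z³` makes it arbitrarily close to `0` and `1` there, and a function with these values
glues functions peaking at a point against `K` and against `τʲ(K)` into one that peaks against both.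

The idempotent theorem itself is obtained one generator at a time: idempotents modulo the linear
pencil `z - a`, with coefficients holomorphic in `z`, exist near every point of the plane, are
glued along rectangles by solving a Cousin problem with Cauchy integrals, and are finally evaluated
at `z = a` by a contour integral.
-/

open scoped Manifold Topology
open Set Metric Filter

noncomputable section

/-- The complex Euclidean space `ℂⁿ`. -/
abbrev CSpace (n : ℕ) : Type := EuclideanSpace ℂ (Fin n)

/-- The space `𝒪(Ω)` of holomorphic functions `Ω → ℂ`, as a subset of `C(Ω, ℂ)` with the
compact-open topology. -/
def OFun {n : ℕ} (Ω : Set (CSpace n)) : Set C(↥Ω, ℂ) :=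
  {f | ∃ g : CSpace n → ℂ, DifferentiableOn ℂ g Ω ∧ ∀ x : ↥Ω, f x = g ↑x}

/-- The `𝒪(Ω)`-convex hull of a set `K ⊆ Ω`. -/
def OHull {n : ℕ} (Ω K : Set (CSpace n)) : Set (CSpace n) :=
  {x ∈ Ω | ∀ f : CSpace n → ℂ, DifferentiableOn ℂ f Ω → ‖f x‖ ≤ ⨆ y : K, ‖f ↑y‖}

/-- `τ` is a generalized translation of `Ω`: for every compact `𝒪(Ω)`-convex `K ⊆ Ω` there is
`j ≥ 1` with `τʲ(K) ∩ K = ∅` and `τʲ(K) ∪ K` again `𝒪(Ω)`-convex. -/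
def IsGenTranslation {n : ℕ} (Ω : Set (CSpace n)) (τ : CSpace n → CSpace n) : Prop :=
  ∀ K : Set (CSpace n), IsCompact K → K ⊆ Ω → OHull Ω K = K →
    ∃ j : ℕ, 1 ≤ j ∧ (τ^[j] '' K) ∩ K = ∅ ∧
      OHull Ω ((τ^[j] '' K) ∪ K) = (τ^[j] '' K) ∪ K

section SeveralVariables

open Function

variable {E F : Type*} [NormedAddCommGroup E] [NormedSpace ℂ E] [NormedAddCommGroup F]
  [NormedSpace ℂ F]

lemma hasDerivAt_add_smul (x v : E) (z : ℂ) : HasDerivAt (fun z : ℂ => x + z • v) v z := by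
  simpa using ((hasDerivAt_id z).smul_const v).const_add x

lemma hasDerivAt_comp_add_smul {f : E → F} {x : E} (hf : DifferentiableAt ℂ f x) (v : E) :
    HasDerivAt (fun z : ℂ => f (x + z • v)) (fderiv ℂ f x v) 0 := by
  have hfx : HasFDerivAt f (fderiv ℂ f x) (x + (0 : ℂ) • v) := by simpa using hf.hasFDerivAt
  exact hfx.comp_hasDerivAt 0 (hasDerivAt_add_smul x v 0)

/-- The Cauchy estimate, obtained by restricting to complex lines through `x`. -/
lemma norm_fderiv_le_div_of_forall_mem_closedBall {f : E → F} {x : E} {r M : ℝ} (hr : 0 < r)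
    (hf : ∀ y ∈ closedBall x r, DifferentiableAt ℂ f y) (hM : ∀ y ∈ closedBall x r, ‖f y‖ ≤ M) :
    ‖fderiv ℂ f x‖ ≤ M / r := by
  have hM₀ : 0 ≤ M := (norm_nonneg _).trans (hM x (mem_closedBall_self hr.le))
  refine ContinuousLinearMap.opNorm_le_bound _ (by positivity) fun v => ?_
  rcases eq_or_ne v 0 with rfl | hv
  · simp
  have hv_pos : 0 < ‖v‖ := norm_pos_iff.2 hv
  have line_mem : ∀ z ∈ closedBall (0 : ℂ) (r / ‖v‖), x + z • v ∈ closedBall x r := by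
    intro z hz
    rw [mem_closedBall_zero_iff, le_div_iff₀ hv_pos] at hz
    simpa [norm_smul] using hz
  have hline : DifferentiableOn ℂ (fun z : ℂ => f (x + z • v)) (closedBall 0 (r / ‖v‖)) :=
    fun z hz => ((hf _ (line_mem z hz)).comp z
      (hasDerivAt_add_smul x v z).differentiableAt).differentiableWithinAt
  have hcauchy := Complex.norm_deriv_le_of_forall_mem_sphere_norm_le (div_pos hr hv_pos)
    (hline.mono closure_ball_subset_closedBall).diffContOnCl
    fun z hz => hM _ (line_mem z (sphere_subset_closedBall hz))
  rw [(hasDerivAt_comp_add_smul (hf x (mem_closedBall_self hr.le)) v).deriv] at hcauchy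
  calc ‖fderiv ℂ f x v‖ ≤ M / (r / ‖v‖) := hcauchy
    _ = M / r * ‖v‖ := by field_simp

lemma dist_fderiv_le_of_forall_mem_closedBall {f g : E → F} {x : E} {r ε : ℝ} (hr : 0 < r)
    (hf : ∀ y ∈ closedBall x r, DifferentiableAt ℂ f y)
    (hg : ∀ y ∈ closedBall x r, DifferentiableAt ℂ g y)
    (hfg : ∀ y ∈ closedBall x r, dist (f y) (g y) ≤ ε) :
    dist (fderiv ℂ f x) (fderiv ℂ g x) ≤ ε / r := by
  have hx := mem_closedBall_self (x := x) hr.le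
  rw [dist_eq_norm, ← fderiv_fun_sub (hf x hx) (hg x hx)]
  refine norm_fderiv_le_div_of_forall_mem_closedBall hr (fun y hy => (hf y hy).fun_sub (hg y hy))
    fun y hy => ?_
  rw [← dist_eq_norm]
  exact hfg y hy

lemma uniformCauchySeqOn_fderiv {ι : Type*} {l : Filter ι} {f : ι → E → F} {x : E} {r : ℝ}
    (hr : 0 < r) (hf : ∀ᶠ i in l, ∀ y ∈ ball x (2 * r), DifferentiableAt ℂ (f i) y)
    (hcauchy : UniformCauchySeqOn f l (ball x (2 * r))) :
    UniformCauchySeqOn (fun i => fderiv ℂ (f i)) l (ball x r) := by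
  have closedBall_subset : ∀ y ∈ ball x r, closedBall y (r / 2) ⊆ ball x (2 * r) := fun y hy =>
    closedBall_subset_ball' (by rw [mem_ball] at hy; linarith)
  intro u hu
  obtain ⟨ε, hε, hεu⟩ := Metric.mem_uniformity_dist.1 hu
  filter_upwards [hcauchy _ (dist_mem_uniformity (by positivity : 0 < ε / 2 * (r / 2))),
    hf.prod_mk hf] with i hclose hdiff y hy
  refine hεu ((dist_fderiv_le_of_forall_mem_closedBall (half_pos hr)
    (fun z hz => hdiff.1 z (closedBall_subset y hy hz))
    (fun z hz => hdiff.2 z (closedBall_subset y hy hz))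
    (fun z hz => (hclose z (closedBall_subset y hy hz)).le)).trans_lt ?_)
  rw [mul_div_cancel_right₀ _ (by positivity)]
  exact half_lt_self hε

/-- **Weierstrass' theorem** in several variables. -/
theorem differentiableOn_of_tendstoLocallyUniformlyOn [ProperSpace E] [CompleteSpace F]
    {ι : Type*} {l : Filter ι} [l.NeBot] {f : ι → E → F} {g : E → F} {U : Set E} (hU : IsOpen U)
    (hfg : TendstoLocallyUniformlyOn f g l U) (hf : ∀ᶠ i in l, DifferentiableOn ℂ (f i) U) :
    DifferentiableOn ℂ g U := by
  intro x hx
  obtain ⟨R, hR, hRU⟩ := Metric.nhds_basis_closedBall.mem_iff.1 (hU.mem_nhds hx)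
  obtain ⟨r, rfl⟩ : ∃ r, R = 2 * r := ⟨R / 2, by ring⟩
  have hr : 0 < r := by linarith
  have ball_subset : ball x (2 * r) ⊆ U := ball_subset_closedBall.trans hRU
  have hunif : TendstoUniformlyOn f g l (ball x (2 * r)) :=
    ((tendstoLocallyUniformlyOn_iff_forall_isCompact hU).1 hfg _ hRU
      (isCompact_closedBall x _)).mono ball_subset_closedBall
  have hdiff : ∀ᶠ i in l, ∀ y ∈ ball x (2 * r), DifferentiableAt ℂ (f i) y :=
    hf.mono fun i hi y hy => hi.differentiableAt (hU.mem_nhds (ball_subset hy))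
  have hcauchy := uniformCauchySeqOn_fderiv hr hdiff hunif.uniformCauchySeqOn
  have hlim : ∀ y ∈ ball x r, ∃ L, Tendsto (fun i => fderiv ℂ (f i) y) l (𝓝 L) :=
    fun y hy => cauchy_map_iff_exists_tendsto.1 (hcauchy.cauchy_map hy)
  choose! g' hg' using hlim
  have hball : ball x r ∈ 𝓝 x := ball_mem_nhds x hr
  have ball_subset_ball : ball x r ⊆ ball x (2 * r) := ball_subset_ball (by linarith)
  refine (hasFDerivAt_of_tendstoUniformlyOnFilter (f := f) (g := g) (𝕜 := ℂ)
    ((hcauchy.tendstoUniformlyOn_of_tendsto hg').tendstoUniformlyOnFilter.mono_right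
      (le_principal_iff.2 hball)) ?_ ?_).differentiableAt.differentiableWithinAt
  · filter_upwards [hdiff.prod_mk hball] with i hi
    exact (hi.1 _ (ball_subset_ball hi.2)).hasFDerivAt
  · filter_upwards [hball] with y hy
    exact hunif.tendsto_at (ball_subset_ball hy)

section ParametricIntegral

variable [ProperSpace E] {f : E → ℝ → F} {U : Set E} {a b : ℝ}

lemma continuousOn_fderiv_of_continuousOn_prod (hU : IsOpen U)
    (hcont : ContinuousOn (uncurry f) (U ×ˢ uIcc a b))
    (hf : ∀ t ∈ uIcc a b, DifferentiableOn ℂ (fun x => f x t) U) {x : E} (hx : x ∈ U) :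
    ContinuousOn (fun t => fderiv ℂ (fun y => f y t) x) (uIcc a b) := by
  obtain ⟨r, hr, hrU⟩ := Metric.nhds_basis_closedBall.mem_iff.1 (hU.mem_nhds hx)
  have hdiff : ∀ t ∈ uIcc a b, ∀ y ∈ closedBall x r, DifferentiableAt ℂ (fun y => f y t) y :=
    fun t ht y hy => (hf t ht).differentiableAt (hU.mem_nhds (hrU hy))
  have hswap : ContinuousOn (uncurry fun t y => f y t) (uIcc a b ×ˢ closedBall x r) :=
    hcont.comp continuous_swap.continuousOn fun p hp => ⟨hrU hp.2, hp.1⟩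
  intro t ht
  refine Metric.tendsto_nhds.2 fun ε hε => ?_
  obtain ⟨V, hV, hclose⟩ := (isCompact_closedBall x r).mem_uniformity_of_prod hswap ht
    (dist_mem_uniformity (by positivity : 0 < ε / 2 * r))
  filter_upwards [hV, self_mem_nhdsWithin] with s hsV hs
  refine (dist_fderiv_le_of_forall_mem_closedBall hr (hdiff s hs) (hdiff t ht)
    fun y hy => (hclose s hsV y hy).le).trans_lt ?_
  rw [mul_div_cancel_right₀ _ hr.ne']
  exact half_lt_self hε

/-- An integral of holomorphic functions is holomorphic: joint continuity suffices, because the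
Cauchy estimate bounds the derivatives. -/
theorem differentiableOn_intervalIntegral_of_continuousOn_prod (hU : IsOpen U)
    (hcont : ContinuousOn (uncurry f) (U ×ˢ uIcc a b))
    (hf : ∀ t ∈ uIcc a b, DifferentiableOn ℂ (fun x => f x t) U) :
    DifferentiableOn ℂ (fun x => ∫ t in a..b, f x t) U := by
  intro x hx
  obtain ⟨R, hR, hRU⟩ := Metric.nhds_basis_closedBall.mem_iff.1 (hU.mem_nhds hx)
  obtain ⟨r, rfl⟩ : ∃ r, R = 2 * r := ⟨R / 2, by ring⟩
  have hr : 0 < r := by linarith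
  obtain ⟨M, hM⟩ := ((isCompact_closedBall x (2 * r)).prod isCompact_uIcc)
    |>.exists_bound_of_continuousOn (hcont.mono (prod_mono_left hRU))
  have closedBall_subset : ∀ y ∈ ball x r, closedBall y r ⊆ closedBall x (2 * r) := fun y hy =>
    closedBall_subset_closedBall' (by rw [mem_ball] at hy; linarith)
  have hdiff : ∀ t ∈ uIcc a b, ∀ y ∈ closedBall x (2 * r), DifferentiableAt ℂ (fun y => f y t) y :=
    fun t ht y hy => (hf t ht).differentiableAt (hU.mem_nhds (hRU hy))
  have hcont_right : ∀ y ∈ U, ContinuousOn (f y) (uIcc a b) := fun y hy =>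
    hcont.comp (Continuous.prodMk_right y).continuousOn fun t ht => ⟨hy, ht⟩
  have hball : ball x r ∈ 𝓝 x := ball_mem_nhds x hr
  have mem_U : ∀ y ∈ ball x r, y ∈ U := fun y hy =>
    hRU (closedBall_subset y hy (mem_closedBall_self hr.le))
  refine (intervalIntegral.hasFDerivAt_integral_of_dominated_of_fderiv_le (𝕜 := ℂ)
    (F' := fun y t => fderiv ℂ (fun z => f z t) y) (bound := fun _ => M / r) hball
    ?_ ?_ ?_ ?_ ?_ ?_).differentiableAt.differentiableWithinAt
  · filter_upwards [hball] with y hy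
    exact ((hcont_right y (mem_U y hy)).mono uIoc_subset_uIcc).aestronglyMeasurable
      measurableSet_uIoc
  · exact (hcont_right x hx).intervalIntegrable
  · exact ((continuousOn_fderiv_of_continuousOn_prod hU hcont hf hx).mono
      uIoc_subset_uIcc).aestronglyMeasurable measurableSet_uIoc
  · exact .of_forall fun t ht y hy => norm_fderiv_le_div_of_forall_mem_closedBall hr
      (fun z hz => hdiff t (uIoc_subset_uIcc ht) z (closedBall_subset y hy hz))
      fun z hz => hM (z, t) ⟨closedBall_subset y hy hz, uIoc_subset_uIcc ht⟩
  · exact intervalIntegrable_const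
  · exact .of_forall fun t ht y hy => (hdiff t (uIoc_subset_uIcc ht) y
      (closedBall_subset y hy (mem_closedBall_self hr.le))).hasFDerivAt

end ParametricIntegral

lemma fderiv_apply_eq_circleIntegral [CompleteSpace F] {f : E → F} {x v : E} {R : ℝ} (hR : 0 < R)
    (hf : ∀ z ∈ closedBall (0 : ℂ) R, DifferentiableAt ℂ f (x + z • v)) :
    fderiv ℂ f x v =
      (2 * Real.pi * Complex.I : ℂ)⁻¹ • ∮ z in C(0, R), (z ^ 2)⁻¹ • f (x + z • v) := by
  have hline : DifferentiableOn ℂ (fun z : ℂ => f (x + z • v)) (closedBall 0 R) := fun z hz =>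
    ((hf z hz).comp z (hasDerivAt_add_smul x v z).differentiableAt).differentiableWithinAt
  have hfx : DifferentiableAt ℂ f x := by simpa using hf 0 (mem_closedBall_self hR.le)
  have hcauchy := hline.deriv_eq_smul_circleIntegral hR
  rw [(hasDerivAt_comp_add_smul hfx v).deriv] at hcauchy
  rw [eq_inv_smul_iff₀ Complex.two_pi_I_ne_zero, ← hcauchy]
  simp only [sub_zero, one_div]

theorem differentiableOn_fderiv_apply [ProperSpace E] [CompleteSpace F] {f : E → F} {U : Set E}
    (hU : IsOpen U) (hf : DifferentiableOn ℂ f U) (v : E) :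
    DifferentiableOn ℂ (fun x => fderiv ℂ f x v) U := by
  intro x hx
  have hcont : Continuous fun p : E × ℂ => p.1 + p.2 • v := by fun_prop
  obtain ⟨V, W, hV, hxV, hW, hW₀, hVW⟩ := mem_nhds_prod_iff'.1
    (hcont.continuousAt.preimage_mem_nhds (x := (x, 0)) (hU.mem_nhds (by simpa using hx)))
  obtain ⟨R, hR, hRW⟩ := Metric.nhds_basis_closedBall.mem_iff.1 (hW.mem_nhds hW₀)
  have add_smul_mem : ∀ y ∈ V, ∀ z ∈ closedBall (0 : ℂ) R, y + z • v ∈ U :=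
    fun y hy z hz => hVW (mk_mem_prod hy (hRW hz))
  have circleMap_mem : ∀ θ, circleMap 0 R θ ∈ closedBall (0 : ℂ) R :=
    circleMap_mem_closedBall 0 hR.le
  have hformula : EqOn (fun y => fderiv ℂ f y v) (fun y => (2 * Real.pi * Complex.I : ℂ)⁻¹ •
      ∮ z in C(0, R), (z ^ 2)⁻¹ • f (y + z • v)) V := fun y hy =>
    fderiv_apply_eq_circleIntegral hR fun z hz =>
      hf.differentiableAt (hU.mem_nhds (add_smul_mem y hy z hz))
  refine ((DifferentiableOn.congr ?_ hformula).differentiableAt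
    (hV.mem_nhds hxV)).differentiableWithinAt
  refine (differentiableOn_intervalIntegral_of_continuousOn_prod hV ?_ fun θ _ => ?_).const_smul _
  · have hf_circle : ContinuousOn (fun p : E × ℝ => f (p.1 + circleMap 0 R p.2 • v))
        (V ×ˢ uIcc 0 (2 * Real.pi)) :=
      hf.continuousOn.comp (by fun_prop) fun p hp => add_smul_mem _ hp.1 _ (circleMap_mem p.2)
    have circleMap_ne : ∀ p : E × ℝ, circleMap 0 R p.2 ^ 2 ≠ 0 := fun p =>
      pow_ne_zero 2 (circleMap_ne_center hR.ne')
    simp only [deriv_circleMap]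
    exact ContinuousOn.smul (by fun_prop)
      ((Continuous.inv₀ (by fun_prop) circleMap_ne).continuousOn.smul hf_circle)
  · refine ((hf.comp (by fun_prop) fun y hy => ?_).const_smul _).const_smul _
    exact add_smul_mem y hy _ (circleMap_mem θ)

lemma sub_eq_integral_fderiv_of_starConvex [ProperSpace E] [CompleteSpace F] {f : E → F}
    {U : Set E} {p : E} (hU : IsOpen U) (hstar : StarConvex ℝ p U) (hf : DifferentiableOn ℂ f U)
    {x : E} (hx : x ∈ U) :
    f x - f p = ∫ t in (0 : ℝ)..1, fderiv ℂ f (p + t • (x - p)) (x - p) := by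
  have segment_mem : ∀ t ∈ uIcc (0 : ℝ) 1, p + t • (x - p) ∈ U := by
    rw [uIcc_of_le zero_le_one]
    exact fun t ht => hstar.add_smul_sub_mem hx ht.1 ht.2
  have hcont : ContinuousOn (fun t : ℝ => fderiv ℂ f (p + t • (x - p)) (x - p)) (uIcc 0 1) :=
    (differentiableOn_fderiv_apply hU hf (x - p)).continuousOn.comp (by fun_prop) segment_mem
  have hderiv : ∀ t ∈ uIcc (0 : ℝ) 1, HasDerivAt (fun t : ℝ => f (p + t • (x - p)))
      (fderiv ℂ f (p + t • (x - p)) (x - p)) t := fun t ht => by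
    have hline : HasDerivAt (fun t : ℝ => p + t • (x - p)) (x - p) t := by
      simpa using ((hasDerivAt_id t).smul_const (x - p)).const_add p
    exact ((hf.differentiableAt (hU.mem_nhds (segment_mem t ht))).hasFDerivAt.restrictScalars
      ℝ).comp_hasDerivAt t hline
  simpa using (intervalIntegral.integral_eq_sub_of_hasDerivAt hderiv hcont.intervalIntegrable).symm

/-- **Hadamard's lemma**: on a star-shaped domain, the coordinates at `p` generate the ideal of the
holomorphic functions vanishing at `p`. -/
theorem exists_eq_add_sum_repr_smul [ProperSpace E] [CompleteSpace F] {ι : Type*} [Fintype ι]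
    (b : Module.Basis ι ℂ E) {f : E → F} {U : Set E} {p : E} (hU : IsOpen U)
    (hstar : StarConvex ℝ p U) (hf : DifferentiableOn ℂ f U) :
    ∃ g : ι → E → F, (∀ i, DifferentiableOn ℂ (g i) U) ∧
      ∀ x ∈ U, f x = f p + ∑ i, b.repr (x - p) i • g i x := by
  have segment_mem : ∀ x ∈ U, ∀ t ∈ uIcc (0 : ℝ) 1, p + t • (x - p) ∈ U := by
    rw [uIcc_of_le zero_le_one]
    exact fun x hx t ht => hstar.add_smul_sub_mem hx ht.1 ht.2
  have hcont : ∀ i, ContinuousOn (fun q : E × ℝ => fderiv ℂ f (p + q.2 • (q.1 - p)) (b i))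
      (U ×ˢ uIcc 0 1) := fun i =>
    (differentiableOn_fderiv_apply hU hf (b i)).continuousOn.comp (by fun_prop)
      fun q hq => segment_mem q.1 hq.1 q.2 hq.2
  refine ⟨fun i x => ∫ t in (0 : ℝ)..1, fderiv ℂ f (p + t • (x - p)) (b i), fun i => ?_,
    fun x hx => ?_⟩
  · refine differentiableOn_intervalIntegral_of_continuousOn_prod hU (hcont i) fun t ht => ?_
    exact (differentiableOn_fderiv_apply hU hf (b i)).comp (by fun_prop)
      fun x hx => segment_mem x hx t ht
  · have hint : ∀ i, IntervalIntegrable (fun t : ℝ => fderiv ℂ f (p + t • (x - p)) (b i))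
        MeasureTheory.volume 0 1 := fun i =>
      ((hcont i).comp (Continuous.prodMk_right x).continuousOn
        fun t ht => ⟨hx, ht⟩).intervalIntegrable
    rw [← sub_eq_iff_eq_add', sub_eq_integral_fderiv_of_starConvex hU hstar hf hx]
    have hexpand : ∀ L : E →L[ℂ] F, L (x - p) = ∑ i, b.repr (x - p) i • L (b i) := fun L =>
      (congrArg L (b.sum_repr (x - p)).symm).trans (by simp only [map_sum, map_smul])
    simp only [hexpand (fderiv ℂ f _)]
    simp only [← intervalIntegral.integral_smul]
    exact intervalIntegral.integral_finsetSum fun i _ => (hint i).smul _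

end SeveralVariables

section GermsOnClosedSets

lemma nhdsSet_inter_of_isClosed {X : Type*} [TopologicalSpace X] [NormalSpace X] {K L : Set X}
    (hK : IsClosed K) (hL : IsClosed L) : 𝓝ˢ (K ∩ L) = 𝓝ˢ K ⊓ 𝓝ˢ L := by
  refine (nhdsSet_inter_le K L).antisymm fun W hW => ?_
  obtain ⟨V, hV, hKLV, hVW⟩ := mem_nhdsSet_iff_exists.1 hW
  have hdisj : 𝓝ˢ (K \ V) ⊓ 𝓝ˢ L = ⊥ := (disjoint_nhdsSet_nhdsSet (hK.sdiff hV) hL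
    (disjoint_left.2 fun x hx hxL => hx.2 (hKLV ⟨hx.1, hxL⟩))).eq_bot
  have hle : 𝓝ˢ K ⊓ 𝓝ˢ L ≤ 𝓟 V :=
    calc 𝓝ˢ K ⊓ 𝓝ˢ L ≤ (𝓝ˢ (K \ V) ⊔ 𝓝ˢ V) ⊓ 𝓝ˢ L := by
          rw [← nhdsSet_union, sdiff_union_self]
          exact inf_le_inf_right _ (nhdsSet_mono subset_union_left)
      _ ≤ 𝓟 V := by
          rw [inf_sup_right, hdisj, bot_sup_eq, hV.nhdsSet_eq]
          exact inf_le_left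
  exact mem_of_superset (hle (mem_principal_self V)) hVW

lemma exists_analyticOnNhd_union {𝕜 E F : Type*} [NontriviallyNormedField 𝕜]
    [NormedAddCommGroup E] [NormedSpace 𝕜 E] [NormedAddCommGroup F] [NormedSpace 𝕜 F]
    {K L : Set E} (hK : IsClosed K) (hL : IsClosed L) {f g : E → F} (hf : AnalyticOnNhd 𝕜 f K)
    (hg : AnalyticOnNhd 𝕜 g L) (hfg : f =ᶠ[𝓝ˢ (K ∩ L)] g) :
    ∃ h, AnalyticOnNhd 𝕜 h (K ∪ L) ∧ f =ᶠ[𝓝ˢ K] h ∧ g =ᶠ[𝓝ˢ L] h := by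
  classical
  rw [nhdsSet_inter_of_isClosed hK hL] at hfg
  obtain ⟨U, hU, V, hV, hUV⟩ := mem_inf_iff_superset.1 hfg
  have hf_eq : f =ᶠ[𝓝ˢ K] U.piecewise f g := by
    filter_upwards [hU] with z hz using (piecewise_eq_of_mem U f g hz).symm
  have hg_eq : g =ᶠ[𝓝ˢ L] U.piecewise f g := by
    filter_upwards [hV] with z hzV
    by_cases hzU : z ∈ U
    · rw [piecewise_eq_of_mem U f g hzU]
      exact (hUV ⟨hzU, hzV⟩).symm
    · rw [piecewise_eq_of_notMem U f g hzU]
  refine ⟨U.piecewise f g, ?_, hf_eq, hg_eq⟩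
  rintro z (hz | hz)
  exacts [hf.congr' hf_eq z hz, hg.congr' hg_eq z hz]

end GermsOnClosedSets

section Rectangles

open Complex

/-- A nonempty compact rectangle with sides parallel to the axes, possibly degenerate. -/
def IsRectangle (R : Set ℂ) : Prop :=
  ∃ a b c d : ℝ, a ≤ b ∧ c ≤ d ∧ R = Icc a b ×ℂ Icc c d

/-- Two compact rectangles which intersect precisely in a common edge. -/
inductive AdjacentRectangles : Set ℂ → Set ℂ → Prop
  | horizontal {a m b c d : ℝ} (ham : a ≤ m) (hmb : m ≤ b) (hcd : c ≤ d) :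
      AdjacentRectangles (Icc a m ×ℂ Icc c d) (Icc m b ×ℂ Icc c d)
  | vertical {a b c m d : ℝ} (hab : a ≤ b) (hcm : c ≤ m) (hmd : m ≤ d) :
      AdjacentRectangles (Icc a b ×ℂ Icc c m) (Icc a b ×ℂ Icc m d)

lemma AdjacentRectangles.isClosed_left {K L : Set ℂ} : AdjacentRectangles K L → IsClosed K
  | .horizontal .. | .vertical .. => isClosed_Icc.reProdIm isClosed_Icc

lemma AdjacentRectangles.isClosed_right {K L : Set ℂ} : AdjacentRectangles K L → IsClosed L
  | .horizontal .. | .vertical .. => isClosed_Icc.reProdIm isClosed_Icc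

lemma reProdIm_inter_reProdIm (S T U V : Set ℝ) :
    (S ×ℂ T) ∩ (U ×ℂ V) = (S ∩ U) ×ℂ (T ∩ V) := by
  ext z
  simp only [mem_inter_iff, mem_reProdIm]
  tauto

lemma AdjacentRectangles.isRectangle_inter {K L : Set ℂ} (h : AdjacentRectangles K L) :
    IsRectangle (K ∩ L) := by
  cases h with
  | @horizontal a m b c d ham hmb hcd =>
    refine ⟨m, m, c, d, le_rfl, hcd, ?_⟩
    rw [reProdIm_inter_reProdIm, Icc_inter_Icc_eq_singleton ham hmb, inter_self, Icc_self]
  | @vertical a b c m d hab hcm hmd =>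
    refine ⟨a, b, m, m, hab, le_rfl, ?_⟩
    rw [reProdIm_inter_reProdIm, Icc_inter_Icc_eq_singleton hcm hmd, inter_self, Icc_self]

lemma exists_Icc_reProdIm_Icc_subset_of_isOpen {a b c d : ℝ} (hab : a ≤ b) (hcd : c ≤ d)
    {U : Set ℂ} (hU : IsOpen U) (hsub : Icc a b ×ℂ Icc c d ⊆ U) :
    ∃ δ > 0, Icc (a - δ) (b + δ) ×ℂ Icc (c - δ) (d + δ) ⊆ U := by
  obtain ⟨ε, hε, hεU⟩ :=
    (isCompact_Icc.reProdIm isCompact_Icc).exists_cthickening_subset_open hU hsub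
  have hclamp : ∀ {p q t : ℝ}, p ≤ q → t ∈ Icc (p - ε / 2) (q + ε / 2) →
      ∃ s ∈ Icc p q, |t - s| ≤ ε / 2 := by
    intro p q t hpq ht
    refine ⟨max p (min q t), ⟨le_max_left _ _, max_le hpq (min_le_left _ _)⟩, ?_⟩
    rw [abs_le]
    rcases le_total q t with h | h <;> rcases le_total p t with h' | h' <;>
      simp only [h, h', hpq, min_eq_left, min_eq_right, max_eq_left, max_eq_right] <;>
      constructor <;> linarith [ht.1, ht.2]
  refine ⟨ε / 2, half_pos hε, fun w hw => hεU ?_⟩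
  obtain ⟨s, hs, hws⟩ := hclamp hab hw.1
  obtain ⟨t, ht, hwt⟩ := hclamp hcd hw.2
  refine mem_cthickening_of_dist_le w ⟨s, t⟩ ε _ ⟨hs, ht⟩ ?_
  rw [dist_eq]
  refine (norm_le_abs_re_add_abs_im _).trans ?_
  simp only [sub_re, sub_im]
  linarith

lemma of_forall_exists_nhds_of_trans {Q : ℝ → ℝ → Prop} {a b : ℝ} (hab : a ≤ b)
    (hlocal : ∀ t ∈ Icc a b, ∃ U ∈ 𝓝 t, ∀ x y, x ≤ y → Icc x y ⊆ U → Q x y)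
    (htrans : ∀ x y z, x ≤ y → y ≤ z → Q x y → Q y z → Q x z) : Q a b := by
  choose! U hU hQ using hlocal
  obtain ⟨t, ht₀, ht_mono, ⟨m, hm⟩, hcover⟩ := exists_monotone_Icc_subset_open_cover_Icc hab
    (c := fun i : Icc a b => Subtype.val ⁻¹' interior (U i))
    (fun i => isOpen_interior.preimage continuous_subtype_val)
    fun i _ => mem_iUnion.2 ⟨i, mem_interior_iff_mem_nhds.2 (hU i i.2)⟩
  have hstep : ∀ n, Q (t n) (t (n + 1)) := by
    intro n
    obtain ⟨i, hi⟩ := hcover n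
    refine hQ i i.2 _ _ (ht_mono n.le_succ) fun s hs => interior_subset ?_
    exact hi (show (⟨s, (t n).2.1.trans hs.1, hs.2.trans (t (n + 1)).2.2⟩ : Icc a b) ∈ _ from hs)
  have hpartial : ∀ n, Q a (t (n + 1)) := by
    intro n
    induction n with
    | zero => simpa [ht₀] using hstep 0
    | succ n ih => exact htrans _ _ _ (t _).2.1 (ht_mono (n + 1).le_succ) ih (hstep (n + 1))
  simpa [hm (m + 1) m.le_succ] using hpartial m

lemma reProdIm_union_right (S T U : Set ℝ) : S ×ℂ (T ∪ U) = S ×ℂ T ∪ S ×ℂ U := by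
  ext z
  simp only [mem_union, mem_reProdIm]
  tauto

lemma reProdIm_union_left (S T U : Set ℝ) : (S ∪ T) ×ℂ U = S ×ℂ U ∪ T ×ℂ U := by
  ext z
  simp only [mem_union, mem_reProdIm]
  tauto

theorem IsRectangle.of_forall_singleton {R : Set ℂ} (hR : IsRectangle R) {P : Set ℂ → Prop}
    (hopen : ∀ K, P K → ∀ᶠ U in (𝓝ˢ K).smallSets, P U)
    (hglue : ∀ K L, AdjacentRectangles K L → P K → P L → P (K ∪ L)) (hP : ∀ z ∈ R, P {z}) :
    P R := by
  obtain ⟨a, b, c, d, hab, hcd, rfl⟩ := hR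
  have hfatten : ∀ p q r s, p ≤ q → r ≤ s → P (Icc p q ×ℂ Icc r s) →
      ∃ δ > 0, ∀ S ⊆ Icc (p - δ) (q + δ) ×ℂ Icc (r - δ) (s + δ), P S := by
    intro p q r s hpq hrs hPpq
    obtain ⟨V, hV, hPV⟩ := eventually_smallSets.1 (hopen _ hPpq)
    obtain ⟨U, hU, hsub, hUV⟩ := mem_nhdsSet_iff_exists.1 hV
    obtain ⟨δ, hδ, hδU⟩ := exists_Icc_reProdIm_Icc_subset_of_isOpen hpq hrs hU hsub
    exact ⟨δ, hδ, fun S hS => hPV S (hS.trans (hδU.trans hUV))⟩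
  have hvertical : ∀ x ∈ Icc a b, P (Icc x x ×ℂ Icc c d) := by
    intro x hx
    refine of_forall_exists_nhds_of_trans (Q := fun u v => P (Icc x x ×ℂ Icc u v)) hcd ?_ ?_
    · intro y hy
      have hpoint : Icc x x ×ℂ Icc y y = {⟨x, y⟩} := by
        ext z
        simp [mem_reProdIm, Complex.ext_iff]
      obtain ⟨δ, hδ, hPδ⟩ := hfatten x x y y le_rfl le_rfl (hpoint ▸ hP ⟨x, y⟩ ⟨hx, hy⟩)
      exact ⟨_, Icc_mem_nhds (by linarith) (by linarith), fun u v _ huv => hPδ _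
        (reProdIm_subset_iff'.2 (.inl ⟨Icc_subset_Icc (by linarith) (by linarith), huv⟩))⟩
    · intro u v w huv hvw hPuv hPvw
      rw [← Icc_union_Icc_eq_Icc huv hvw, reProdIm_union_right]
      exact hglue _ _ (.vertical le_rfl huv hvw) hPuv hPvw
  refine of_forall_exists_nhds_of_trans (Q := fun u v => P (Icc u v ×ℂ Icc c d)) hab ?_ ?_
  · intro x hx
    obtain ⟨δ, hδ, hPδ⟩ := hfatten x x c d le_rfl hcd (hvertical x hx)
    exact ⟨_, Icc_mem_nhds (by linarith) (by linarith), fun u v _ huv => hPδ _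
      (reProdIm_subset_iff'.2 (.inl ⟨huv, Icc_subset_Icc (by linarith) (by linarith)⟩))⟩
  · intro u v w huv hvw hPuv hPvw
    rw [← Icc_union_Icc_eq_Icc huv hvw, reProdIm_union_left]
    exact hglue _ _ (.horizontal huv hvw hcd) hPuv hPvw

end Rectangles

section CauchyFormulaOnRectangles

open Complex

variable {E : Type*} [NormedAddCommGroup E] [NormedSpace ℂ E]

/-- The contour integral of `f` along the boundary of `[a, b] × [c, d]`, traversed
counterclockwise. -/
def rectangleIntegral (f : ℂ → E) (a b c d : ℝ) : E :=
  (∫ x : ℝ in a..b, f (x + c * I)) - (∫ x : ℝ in a..b, f (x + d * I)) +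
    I • (∫ y : ℝ in c..d, f (b + y * I)) - I • ∫ y : ℝ in c..d, f (a + y * I)

/-- The boundary of `[a, b] × [c, d]`, as a subset of `ℂ`. -/
def rectangleBoundary (a b c d : ℝ) : Set ℂ :=
  (Icc a b ×ℂ Icc c d) \ (Ioo a b ×ℂ Ioo c d)

lemma horizontal_mem_rectangleBoundary {a b c d x t : ℝ} (hx : x ∈ Icc a b) (hcd : c ≤ d)
    (ht : t = c ∨ t = d) : (x : ℂ) + t * I ∈ rectangleBoundary a b c d := by
  simp only [rectangleBoundary, Set.mem_sdiff, mem_reProdIm, add_re, add_im, mul_re, mul_im,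
    ofReal_re, ofReal_im, I_re, I_im]
  rcases ht with rfl | rfl <;> simpa using ⟨hx, hcd⟩

lemma vertical_mem_rectangleBoundary {a b c d t y : ℝ} (hab : a ≤ b) (hy : y ∈ Icc c d)
    (ht : t = a ∨ t = b) : (t : ℂ) + y * I ∈ rectangleBoundary a b c d := by
  simp only [rectangleBoundary, Set.mem_sdiff, mem_reProdIm, add_re, add_im, mul_re, mul_im,
    ofReal_re, ofReal_im, I_re, I_im]
  rcases ht with rfl | rfl <;> simpa [hab] using hy

variable {a b c d : ℝ}

lemma continuousOn_horizontal {X : Type*} [TopologicalSpace X] {f : ℂ → X}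
    (hf : ContinuousOn f (rectangleBoundary a b c d))
    (hab : a ≤ b) (hcd : c ≤ d) {t : ℝ} (ht : t = c ∨ t = d) :
    ContinuousOn (fun x : ℝ => f (x + t * I)) (uIcc a b) :=
  hf.comp (by fun_prop) fun _ hx =>
    horizontal_mem_rectangleBoundary (uIcc_of_le hab ▸ hx) hcd ht

lemma continuousOn_vertical {X : Type*} [TopologicalSpace X] {f : ℂ → X}
    (hf : ContinuousOn f (rectangleBoundary a b c d))
    (hab : a ≤ b) (hcd : c ≤ d) {t : ℝ} (ht : t = a ∨ t = b) :
    ContinuousOn (fun y : ℝ => f (t + y * I)) (uIcc c d) :=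
  hf.comp (by fun_prop) fun _ hy =>
    vertical_mem_rectangleBoundary hab (uIcc_of_le hcd ▸ hy) ht

lemma rectangleIntegral_congr {f g : ℂ → E} (hab : a ≤ b) (hcd : c ≤ d)
    (hfg : EqOn f g (rectangleBoundary a b c d)) :
    rectangleIntegral f a b c d = rectangleIntegral g a b c d := by
  have hh : ∀ t, t = c ∨ t = d → ∫ x : ℝ in a..b, f (x + t * I) = ∫ x : ℝ in a..b, g (x + t * I) :=
    fun t ht => intervalIntegral.integral_congr fun x hx =>
      hfg (horizontal_mem_rectangleBoundary (uIcc_of_le hab ▸ hx) hcd ht)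
  have hv : ∀ t, t = a ∨ t = b → ∫ y : ℝ in c..d, f (t + y * I) = ∫ y : ℝ in c..d, g (t + y * I) :=
    fun t ht => intervalIntegral.integral_congr fun y hy =>
      hfg (vertical_mem_rectangleBoundary hab (uIcc_of_le hcd ▸ hy) ht)
  simp only [rectangleIntegral, hh c (.inl rfl), hh d (.inr rfl), hv a (.inl rfl), hv b (.inr rfl)]

lemma rectangleIntegral_add {f g : ℂ → E} (hab : a ≤ b) (hcd : c ≤ d)
    (hf : ContinuousOn f (rectangleBoundary a b c d))
    (hg : ContinuousOn g (rectangleBoundary a b c d)) :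
    rectangleIntegral (fun z => f z + g z) a b c d =
      rectangleIntegral f a b c d + rectangleIntegral g a b c d := by
  have hh : ∀ t, t = c ∨ t = d → ∫ x : ℝ in a..b, (f (x + t * I) + g (x + t * I)) =
      (∫ x : ℝ in a..b, f (x + t * I)) + ∫ x : ℝ in a..b, g (x + t * I) := fun t ht =>
    intervalIntegral.integral_add (continuousOn_horizontal hf hab hcd ht).intervalIntegrable
      (continuousOn_horizontal hg hab hcd ht).intervalIntegrable
  have hv : ∀ t, t = a ∨ t = b → ∫ y : ℝ in c..d, (f (t + y * I) + g (t + y * I)) =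
      (∫ y : ℝ in c..d, f (t + y * I)) + ∫ y : ℝ in c..d, g (t + y * I) := fun t ht =>
    intervalIntegral.integral_add (continuousOn_vertical hf hab hcd ht).intervalIntegrable
      (continuousOn_vertical hg hab hcd ht).intervalIntegrable
  simp only [rectangleIntegral, hh c (.inl rfl), hh d (.inr rfl), hv a (.inl rfl), hv b (.inr rfl),
    smul_add]
  abel

lemma rectangleIntegral_smul_const [CompleteSpace E] (f : ℂ → ℂ) (v : E) :
    rectangleIntegral (fun z => f z • v) a b c d = rectangleIntegral f a b c d • v := by
  simp only [rectangleIntegral, intervalIntegral.integral_smul_const, add_smul, sub_smul,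
    smul_assoc]

lemma log_I_mul_of_re_pos {w : ℂ} (hw : 0 < w.re) : log (I * w) = Real.pi / 2 * I + log w := by
  have hw0 : w ≠ 0 := by
    rintro rfl
    simp at hw
  have harg := abs_lt.1 (abs_arg_lt_pi_div_two_iff.2 (Or.inl hw))
  rw [(log_mul_eq_add_log_iff I_ne_zero hw0).2, log_I]
  rw [arg_I]
  constructor <;> linarith [Real.pi_pos]

lemma mul_integral_inv_eq_log_sub_log {u v w : ℂ} (hre : ∀ x : ℝ, 0 < (u * (x * v + w)).re)
    (a b : ℝ) : v * (∫ x : ℝ in a..b, ((x : ℂ) * v + w)⁻¹) =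
      log (u * (b * v + w)) - log (u * (a * v + w)) := by
  have hne : ∀ x : ℝ, u * ((x : ℂ) * v + w) ≠ 0 := fun x h => by simpa [h] using hre x
  rw [← intervalIntegral.integral_const_mul]
  refine intervalIntegral.integral_eq_sub_of_hasDerivAt
    (f := fun x : ℝ => log (u * (x * v + w))) (fun x _ => ?_) ?_
  · have hderiv : HasDerivAt (fun x : ℝ => u * ((x : ℂ) * v + w)) (u * (1 * v)) x :=
      ((((hasDerivAt_id (x : ℂ)).comp_ofReal).mul_const v).add_const w).const_mul u
    have hlog := hderiv.clog_real (Or.inl (hre x))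
    rwa [one_mul, mul_div_mul_left _ _ (left_ne_zero_of_mul (hne x)), div_eq_mul_inv] at hlog
  · exact (continuous_const.mul (Continuous.inv₀ (by fun_prop) fun x =>
      right_ne_zero_of_mul (hne x))).intervalIntegrable _ _

-- On each edge `u * (w - z)` stays in the right half plane for one of `u = I, 1, -I, -1`, so that
-- `log (u * (w - z))` is a primitive; two such primitives differ by `π / 2 * I` at a common vertex.
lemma rectangleIntegral_inv_sub {z : ℂ} (hz : z ∈ Ioo a b ×ℂ Ioo c d) :
    rectangleIntegral (fun w => (w - z)⁻¹) a b c d = 2 * Real.pi * I := by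
  obtain ⟨⟨hza, hzb⟩, ⟨hzc, hzd⟩⟩ := hz
  have hbottom := mul_integral_inv_eq_log_sub_log (u := I) (v := 1) (w := c * I - z)
    (by intro x; simpa using hzc) a b
  have htop := mul_integral_inv_eq_log_sub_log (u := -I) (v := 1) (w := d * I - z)
    (by intro x; simpa using hzd) a b
  have hright := mul_integral_inv_eq_log_sub_log (u := 1) (v := I) (w := b - z)
    (by intro x; simpa using hzb) c d
  have hleft := mul_integral_inv_eq_log_sub_log (u := -1) (v := I) (w := a - z)
    (by intro x; simpa using hza) c d
  have hbottom_right : log (I * (b * 1 + (c * I - z))) = Real.pi / 2 * I +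
      log (1 * (c * I + (b - z))) := by
    rw [← log_I_mul_of_re_pos (by simpa using hzb)]
    ring_nf
  have htop_right : log (1 * (d * I + (b - z))) = Real.pi / 2 * I +
      log (-I * (b * 1 + (d * I - z))) := by
    rw [← log_I_mul_of_re_pos (by simpa using hzd)]
    congr 1
    linear_combination (b * 1 + (d * I - z)) * I_mul_I
  have htop_left : log (-I * (a * 1 + (d * I - z))) = Real.pi / 2 * I +
      log (-1 * (d * I + (a - z))) := by
    rw [← log_I_mul_of_re_pos (by simpa using hza)]
    ring_nf
  have hbottom_left : log (-1 * (c * I + (a - z))) = Real.pi / 2 * I +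
      log (I * (a * 1 + (c * I - z))) := by
    rw [← log_I_mul_of_re_pos (by simpa using hzc)]
    congr 1
    linear_combination -(a * 1 + (c * I - z)) * I_mul_I
  have hhorizontal : ∀ x t : ℝ, (x : ℂ) + t * I - z = x * 1 + (t * I - z) := fun x t => by ring
  have hvertical : ∀ t y : ℝ, (t : ℂ) + y * I - z = y * I + (t - z) := fun t y => by ring
  simp only [rectangleIntegral, smul_eq_mul, hhorizontal _ c, hhorizontal _ d, hvertical a,
    hvertical b, hright, hleft]
  linear_combination hbottom - htop + hbottom_right + htop_right + htop_left + hbottom_left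

theorem rectangleIntegral_inv_sub_smul [CompleteSpace E] {G : ℂ → E} {U : Set ℂ} (hU : IsOpen U)
    (hG : DifferentiableOn ℂ G U) (hsub : Icc a b ×ℂ Icc c d ⊆ U) {z : ℂ}
    (hz : z ∈ Ioo a b ×ℂ Ioo c d) :
    rectangleIntegral (fun w => (w - z)⁻¹ • G w) a b c d = (2 * Real.pi * I : ℂ) • G z := by
  have hab : a ≤ b := (hz.1.1.trans hz.1.2).le
  have hcd : c ≤ d := (hz.2.1.trans hz.2.2).le
  have hboundary : rectangleBoundary a b c d ⊆ U := sdiff_subset.trans hsub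
  have hne : ∀ w ∈ rectangleBoundary a b c d, w ≠ z := by
    rintro _ hw rfl
    exact hw.2 hz
  have hslope : DifferentiableOn ℂ (dslope G z) U :=
    (differentiableOn_dslope (hU.mem_nhds (hsub (reProdIm_subset_iff'.2
      (.inl ⟨Ioo_subset_Icc_self, Ioo_subset_Icc_self⟩) hz)))).2 hG
  have hslope_integral : rectangleIntegral (dslope G z) a b c d = 0 := by
    simpa [rectangleIntegral] using integral_boundary_rect_eq_zero_of_differentiableOn (dslope G z)
      (a + c * I) (b + d * I) (hslope.mono (by simpa [uIcc_of_le hab, uIcc_of_le hcd] using hsub))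
  calc rectangleIntegral (fun w => (w - z)⁻¹ • G w) a b c d
      = rectangleIntegral (fun w => dslope G z w + (w - z)⁻¹ • G z) a b c d := by
        refine rectangleIntegral_congr hab hcd fun w hw => ?_
        simp only [dslope_of_ne _ (hne w hw), slope_def_module, smul_sub, sub_add_cancel]
    _ = (2 * Real.pi * I : ℂ) • G z := by
        rw [rectangleIntegral_add hab hcd (hslope.continuousOn.mono hboundary),
          hslope_integral, zero_add, rectangleIntegral_smul_const, rectangleIntegral_inv_sub hz]
        exact ((continuousOn_id.sub continuousOn_const).inv₀ fun w hw =>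
          sub_ne_zero.2 (hne w hw)).smul continuousOn_const

end CauchyFormulaOnRectangles

section CousinSplitting

open Complex

variable {E : Type*} [NormedAddCommGroup E] [NormedSpace ℂ E]

/-- The additive Cousin problem with data `G` near `K ∩ L` is solvable: `G` is the difference of
functions analytic near `K` and near `L`. -/
def IsCousinSplittable (K L : Set ℂ) (G : ℂ → E) : Prop :=
  ∃ G₁ G₂ : ℂ → E, AnalyticOnNhd ℂ G₁ K ∧ AnalyticOnNhd ℂ G₂ L ∧ G =ᶠ[𝓝ˢ (K ∩ L)] G₁ - G₂

namespace IsCousinSplittable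

variable {K L : Set ℂ} {G H : ℂ → E}

lemma of_analyticOnNhd_left (hG : AnalyticOnNhd ℂ G K) : IsCousinSplittable K L G :=
  ⟨G, 0, hG, analyticOnNhd_const, by simp⟩

lemma of_analyticOnNhd_right (hG : AnalyticOnNhd ℂ G L) : IsCousinSplittable K L G :=
  ⟨0, -G, analyticOnNhd_const, hG.neg, by simp⟩

lemma congr (hG : IsCousinSplittable K L G) (hHG : H =ᶠ[𝓝ˢ (K ∩ L)] G) :
    IsCousinSplittable K L H :=
  let ⟨G₁, G₂, hG₁, hG₂, heq⟩ := hG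
  ⟨G₁, G₂, hG₁, hG₂, hHG.trans heq⟩

lemma add (hG : IsCousinSplittable K L G) (hH : IsCousinSplittable K L H) :
    IsCousinSplittable K L (G + H) := by
  obtain ⟨G₁, G₂, hG₁, hG₂, hGeq⟩ := hG
  obtain ⟨H₁, H₂, hH₁, hH₂, hHeq⟩ := hH
  refine ⟨G₁ + H₁, G₂ + H₂, hG₁.add hH₁, hG₂.add hH₂, ?_⟩
  exact (hGeq.add hHeq).trans (Eventually.of_forall fun z => by simp; abel)

lemma const_smul (c : ℂ) (hG : IsCousinSplittable K L G) : IsCousinSplittable K L (c • G) := by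
  obtain ⟨G₁, G₂, hG₁, hG₂, hGeq⟩ := hG
  refine ⟨c • G₁, c • G₂, analyticOnNhd_const.smul hG₁, analyticOnNhd_const.smul hG₂, ?_⟩
  exact (hGeq.const_smul c).trans (Eventually.of_forall fun z => by simp [smul_sub])

lemma sub (hG : IsCousinSplittable K L G) (hH : IsCousinSplittable K L H) :
    IsCousinSplittable K L (G - H) := by
  simpa [sub_eq_add_neg] using hG.add (hH.const_smul (-1))

end IsCousinSplittable

lemma analyticOnNhd_integral_inv_sub_smul [CompleteSpace E] {γ : ℝ → ℂ} {g : ℝ → E} {p q : ℝ}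
    (hγ : ContinuousOn γ (uIcc p q)) (hg : ContinuousOn g (uIcc p q)) :
    AnalyticOnNhd ℂ (fun z => ∫ x in p..q, (γ x - z)⁻¹ • g x) (γ '' uIcc p q)ᶜ := by
  have hopen : IsOpen (γ '' uIcc p q)ᶜ :=
    (isCompact_uIcc.image_of_continuousOn hγ).isClosed.isOpen_compl
  have hne : ∀ z ∈ (γ '' uIcc p q)ᶜ, ∀ x ∈ uIcc p q, γ x - z ≠ 0 := fun z hz x hx h =>
    hz ⟨x, hx, sub_eq_zero.1 h⟩
  refine (differentiableOn_intervalIntegral_of_continuousOn_prod hopen ?_ ?_).analyticOnNhd hopen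
  · refine (((hγ.comp continuousOn_snd fun w hw => hw.2).sub continuousOn_fst).inv₀
      fun w hw => hne _ hw.1 _ hw.2).smul (hg.comp continuousOn_snd fun w hw => hw.2)
  · exact fun x hx => (((differentiableOn_const _).sub differentiableOn_id).inv
      fun z hz => hne z hz x hx).smul_const _

theorem IsCousinSplittable.of_rectangle [CompleteSpace E] {K L : Set ℂ} {G : ℂ → E} {a b c d : ℝ}
    (hab : a ≤ b) (hcd : c ≤ d) (hG : AnalyticOnNhd ℂ G (Icc a b ×ℂ Icc c d))
    (hKL : K ∩ L ⊆ Ioo a b ×ℂ Ioo c d)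
    (hhorizontal : ∀ t, t = c ∨ t = d → (∀ z ∈ K, z.im ≠ t) ∨ ∀ z ∈ L, z.im ≠ t)
    (hvertical : ∀ t, t = a ∨ t = b → (∀ z ∈ K, z.re ≠ t) ∨ ∀ z ∈ L, z.re ≠ t) :
    IsCousinSplittable K L G := by
  have hGcont : ContinuousOn G (rectangleBoundary a b c d) := hG.continuousOn.mono sdiff_subset
  have hedge : ∀ {γ : ℝ → ℂ} {p q : ℝ}, Continuous γ → ContinuousOn (fun x => G (γ x)) (uIcc p q) →
      ((∀ z ∈ K, ∀ x, γ x ≠ z) ∨ ∀ z ∈ L, ∀ x, γ x ≠ z) →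
      IsCousinSplittable K L (fun z => ∫ x in p..q, (γ x - z)⁻¹ • G (γ x)) := by
    rintro γ p q hγ hGγ (hK | hL)
    · exact .of_analyticOnNhd_left ((analyticOnNhd_integral_inv_sub_smul hγ.continuousOn hGγ).mono
        fun z hz ⟨x, _, hx⟩ => hK z hz x hx)
    · exact .of_analyticOnNhd_right ((analyticOnNhd_integral_inv_sub_smul hγ.continuousOn hGγ).mono
        fun z hz ⟨x, _, hx⟩ => hL z hz x hx)
  have hh : ∀ t, t = c ∨ t = d → IsCousinSplittable K L
      (fun z => ∫ x : ℝ in a..b, (x + t * I - z)⁻¹ • G (x + t * I)) := fun t ht =>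
    hedge (by fun_prop) (continuousOn_horizontal hGcont hab hcd ht) <|
      (hhorizontal t ht).imp (fun h z hz x hx => h z hz (by simp [← hx]))
        (fun h z hz x hx => h z hz (by simp [← hx]))
  have hv : ∀ t, t = a ∨ t = b → IsCousinSplittable K L
      (fun z => ∫ y : ℝ in c..d, (t + y * I - z)⁻¹ • G (t + y * I)) := fun t ht =>
    hedge (by fun_prop) (continuousOn_vertical hGcont hab hcd ht) <|
      (hvertical t ht).imp (fun h z hz x hx => h z hz (by simp [← hx]))
        (fun h z hz x hx => h z hz (by simp [← hx]))
  refine (((((hh c (.inl rfl)).sub (hh d (.inr rfl))).add ((hv b (.inr rfl)).const_smul I)).sub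
    ((hv a (.inl rfl)).const_smul I)).const_smul (2 * Real.pi * I)⁻¹).congr ?_
  filter_upwards [(isOpen_Ioo.reProdIm isOpen_Ioo).mem_nhdsSet.2 hKL] with z hz
  have hformula := rectangleIntegral_inv_sub_smul (isOpen_analyticAt ℂ G)
    (fun w hw => hw.differentiableAt.differentiableWithinAt) hG hz
  rw [rectangleIntegral] at hformula
  simp only [Pi.smul_apply, Pi.sub_apply, Pi.add_apply, hformula]
  rw [inv_smul_smul₀ two_pi_I_ne_zero]

theorem AdjacentRectangles.isCousinSplittable [CompleteSpace E] {K L : Set ℂ}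
    (h : AdjacentRectangles K L) {G : ℂ → E} (hG : AnalyticOnNhd ℂ G (K ∩ L)) :
    IsCousinSplittable K L G := by
  cases h with
  | horizontal ham hmb hcd =>
    rw [reProdIm_inter_reProdIm, Icc_inter_Icc_eq_singleton ham hmb, inter_self, ← Icc_self] at hG
    obtain ⟨δ, hδ, hsub⟩ := exists_Icc_reProdIm_Icc_subset_of_isOpen le_rfl hcd
      (isOpen_analyticAt ℂ G) hG
    refine .of_rectangle (by linarith) (by linarith) hsub ?_ ?_ ?_
    · rintro z ⟨⟨⟨_, hzm⟩, hzc, hzd⟩, ⟨hmz, _⟩, _⟩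
      exact ⟨⟨by linarith, by linarith⟩, by linarith, by linarith⟩
    · rintro t (rfl | rfl) <;> exact .inl fun z ⟨_, hzc, hzd⟩ => by linarith
    · rintro t (rfl | rfl)
      exacts [.inr fun z ⟨⟨hmz, _⟩, _⟩ => by linarith, .inl fun z ⟨⟨_, hzm⟩, _⟩ => by linarith]
  | vertical hab hcm hmd =>
    rw [reProdIm_inter_reProdIm, Icc_inter_Icc_eq_singleton hcm hmd, inter_self, ← Icc_self] at hG
    obtain ⟨δ, hδ, hsub⟩ := exists_Icc_reProdIm_Icc_subset_of_isOpen hab le_rfl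
      (isOpen_analyticAt ℂ G) hG
    refine .of_rectangle (by linarith) (by linarith) hsub ?_ ?_ ?_
    · rintro z ⟨⟨⟨hza, hzb⟩, _, hzm⟩, _, hmz, _⟩
      exact ⟨⟨by linarith, by linarith⟩, by linarith, by linarith⟩
    · rintro t (rfl | rfl)
      exacts [.inr fun z ⟨_, hmz, _⟩ => by linarith, .inl fun z ⟨_, _, hzm⟩ => by linarith]
    · rintro t (rfl | rfl) <;> exact .inl fun z ⟨⟨hza, hzb⟩, _⟩ => by linarith

end CousinSplitting

section Pencil

variable {A : Type*} [NormedCommRing A] [NormedAlgebra ℂ A]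

/-- The linear pencil `z ↦ z • 1 - a`. A holomorphic `f` modulo multiples of `pencil a` plays the
role of the element `f(a)` that a holomorphic functional calculus would produce. -/
def pencil (a : A) (z : ℂ) : A := algebraMap ℂ A z - a

lemma analyticOnNhd_pencil (a : A) (K : Set ℂ) : AnalyticOnNhd ℂ (pencil a) K :=
  ((algebraMapCLM ℂ A).analyticOnNhd K).sub analyticOnNhd_const

lemma character_pencil (φ : WeakDual.characterSpace ℂ A) (a : A) (z : ℂ) :
    φ (pencil a z) = z - φ a := by
  simp [pencil, AlgHomClass.commutes]

/-- `f` is, near `K`, a holomorphic multiple of the pencil of `a`. -/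
def IsPencilMultiple (a : A) (K : Set ℂ) (f : ℂ → A) : Prop :=
  ∃ v, AnalyticOnNhd ℂ v K ∧ f =ᶠ[𝓝ˢ K] pencil a * v

namespace IsPencilMultiple

variable {a : A} {K L : Set ℂ} {f g : ℂ → A}

lemma mono (hf : IsPencilMultiple a K f) (hLK : L ⊆ K) : IsPencilMultiple a L f := by
  obtain ⟨v, hv, hfv⟩ := hf
  exact ⟨v, hv.mono hLK, hfv.filter_mono (nhdsSet_mono hLK)⟩

lemma congr (hf : IsPencilMultiple a K f) (hgf : g =ᶠ[𝓝ˢ K] f) : IsPencilMultiple a K g := by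
  obtain ⟨v, hv, hfv⟩ := hf
  exact ⟨v, hv, hgf.trans hfv⟩

lemma mul_left (hf : IsPencilMultiple a K f) (hg : AnalyticOnNhd ℂ g K) :
    IsPencilMultiple a K (g * f) := by
  obtain ⟨v, hv, hfv⟩ := hf
  refine ⟨g * v, hg.mul hv, (hfv.mul_left (f₃ := g)).trans (.of_eq ?_)⟩
  ring

lemma add (hf : IsPencilMultiple a K f) (hg : IsPencilMultiple a K g) :
    IsPencilMultiple a K (f + g) := by
  obtain ⟨v, hv, hfv⟩ := hf
  obtain ⟨w, hw, hgw⟩ := hg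
  exact ⟨v + w, hv.add hw, (hfv.add hgw).trans (.of_eq (mul_add _ _ _).symm)⟩

lemma neg (hf : IsPencilMultiple a K f) : IsPencilMultiple a K (-f) := by
  obtain ⟨v, hv, hfv⟩ := hf
  exact ⟨-v, hv.neg, hfv.neg.trans (.of_eq (mul_neg _ _).symm)⟩

lemma sub (hf : IsPencilMultiple a K f) (hg : IsPencilMultiple a K g) :
    IsPencilMultiple a K (f - g) :=
  sub_eq_add_neg f g ▸ hf.add hg.neg

lemma eventually_character_apply_eq_zero (hf : IsPencilMultiple a K f) :
    ∀ᶠ z in 𝓝ˢ K, ∀ φ : WeakDual.characterSpace ℂ A, φ a = z → φ (f z) = 0 := by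
  obtain ⟨v, -, hfv⟩ := hf
  filter_upwards [hfv] with z hz φ hφ
  rw [hz, Pi.mul_apply, map_mul, character_pencil, hφ, sub_self, zero_mul]

lemma character_apply_eq_zero (hf : IsPencilMultiple a K f) {φ : WeakDual.characterSpace ℂ A}
    (hφ : φ a ∈ K) : φ (f (φ a)) = 0 :=
  hf.eventually_character_apply_eq_zero.self_of_nhdsSet _ hφ φ rfl

/-- Multiplication by the pencil need not be injective, so two quotients of `f` by it need not
agree on the overlap; they do after multiplication by `f`. -/
lemma sq_union (hK : IsClosed K) (hL : IsClosed L) (hf : AnalyticOnNhd ℂ f (K ∪ L))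
    (hfK : IsPencilMultiple a K f) (hfL : IsPencilMultiple a L f) :
    IsPencilMultiple a (K ∪ L) (f ^ 2) := by
  obtain ⟨v₁, hv₁, hfv₁⟩ := hfK
  obtain ⟨v₂, hv₂, hfv₂⟩ := hfL
  have hoverlap : v₁ * f =ᶠ[𝓝ˢ (K ∩ L)] v₂ * f := by
    filter_upwards [hfv₁.filter_mono (nhdsSet_mono inter_subset_left),
      hfv₂.filter_mono (nhdsSet_mono inter_subset_right)] with z h₁ h₂
    simp only [Pi.mul_apply] at h₁ h₂ ⊢
    linear_combination v₁ z * h₂ - v₂ z * h₁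
  obtain ⟨v, hv, hvK, hvL⟩ := exists_analyticOnNhd_union hK hL
    (hv₁.mul (hf.mono subset_union_left)) (hv₂.mul (hf.mono subset_union_right)) hoverlap
  refine ⟨v, hv, ?_⟩
  rw [nhdsSet_union]
  refine eventually_sup.2 ⟨?_, ?_⟩
  · filter_upwards [hfv₁, hvK] with z hfz hvz
    simp only [Pi.mul_apply, Pi.pow_apply] at hfz hvz ⊢
    linear_combination f z * hfz + pencil a z * hvz
  · filter_upwards [hfv₂, hvL] with z hfz hvz
    simp only [Pi.mul_apply, Pi.pow_apply] at hfz hvz ⊢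
    linear_combination f z * hfz + pencil a z * hvz

end IsPencilMultiple

lemma eventually_smallSets_eventually_nhdsSet {X : Type*} [TopologicalSpace X] {K : Set X}
    {p : X → Prop} (hp : ∀ᶠ x in 𝓝ˢ K, p x) :
    ∀ᶠ U in (𝓝ˢ K).smallSets, ∀ᶠ x in 𝓝ˢ U, p x := by
  simp only [eventually_nhdsSet_iff_forall (s := _)]
  exact eventually_smallSets_forall.2 hp.eventually_nhdsSet

lemma eventually_smallSets_analyticOnNhd [CompleteSpace A] {K : Set ℂ} {f : ℂ → A}
    (hf : AnalyticOnNhd ℂ f K) : ∀ᶠ U in (𝓝ˢ K).smallSets, AnalyticOnNhd ℂ f U :=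
  eventually_smallSets_forall.2 ((isOpen_analyticAt ℂ f).mem_nhdsSet.2 hf)

lemma IsPencilMultiple.eventually_smallSets [CompleteSpace A] {a : A} {K : Set ℂ} {f : ℂ → A}
    (hf : IsPencilMultiple a K f) : ∀ᶠ U in (𝓝ˢ K).smallSets, IsPencilMultiple a U f := by
  obtain ⟨v, hv, hfv⟩ := hf
  filter_upwards [eventually_smallSets_analyticOnNhd hv,
    eventually_smallSets_eventually_nhdsSet hfv] with U hvU hfvU using ⟨v, hvU, hfvU⟩

lemma AdjacentRectangles.exists_glue_mod_pencil [CompleteSpace A] {a : A} {K L : Set ℂ}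
    {f₁ f₂ : ℂ → A} (h : AdjacentRectangles K L) (hf₁ : AnalyticOnNhd ℂ f₁ K)
    (hf₂ : AnalyticOnNhd ℂ f₂ L) (hsub : IsPencilMultiple a (K ∩ L) (f₁ - f₂)) :
    ∃ f, AnalyticOnNhd ℂ f (K ∪ L) ∧ IsPencilMultiple a K (f - f₁) ∧
      IsPencilMultiple a L (f - f₂) := by
  obtain ⟨v, hv, hfv⟩ := hsub
  obtain ⟨v₁, v₂, hv₁, hv₂, hv₁₂⟩ := h.isCousinSplittable hv
  have hoverlap : f₁ - pencil a * v₁ =ᶠ[𝓝ˢ (K ∩ L)] f₂ - pencil a * v₂ := by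
    filter_upwards [hfv, hv₁₂] with z hfz hvz
    simp only [Pi.sub_apply, Pi.mul_apply] at hfz hvz ⊢
    linear_combination hfz + pencil a z * hvz
  obtain ⟨f, hf, hfK, hfL⟩ := exists_analyticOnNhd_union h.isClosed_left h.isClosed_right
    (hf₁.sub ((analyticOnNhd_pencil a K).mul hv₁))
    (hf₂.sub ((analyticOnNhd_pencil a L).mul hv₂)) hoverlap
  refine ⟨f, hf, ⟨-v₁, hv₁.neg, ?_⟩, ⟨-v₂, hv₂.neg, ?_⟩⟩
  · filter_upwards [hfK] with z hz
    simp only [Pi.sub_apply, Pi.mul_apply, Pi.neg_apply] at hz ⊢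
    linear_combination -hz
  · filter_upwards [hfL] with z hz
    simp only [Pi.sub_apply, Pi.mul_apply, Pi.neg_apply] at hz ⊢
    linear_combination -hz

end Pencil

section InvertibilityModPencil

variable {A : Type*} [NormedCommRing A] [NormedAlgebra ℂ A] [CompleteSpace A] {a : A}

/-- `g` is, near `K`, invertible modulo holomorphic multiples of the pencil of `a`. -/
def IsInvertibleModPencil (a : A) (g : ℂ → A) (K : Set ℂ) : Prop :=
  ∃ u, AnalyticOnNhd ℂ u K ∧ IsPencilMultiple a K (g * u - 1)

lemma IsInvertibleModPencil.union {g : ℂ → A} {K L : Set ℂ} (h : AdjacentRectangles K L)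
    (hg : AnalyticOnNhd ℂ g (K ∪ L)) (hgK : IsInvertibleModPencil a g K)
    (hgL : IsInvertibleModPencil a g L) : IsInvertibleModPencil a g (K ∪ L) := by
  obtain ⟨u₁, hu₁, hgu₁⟩ := hgK
  obtain ⟨u₂, hu₂, hgu₂⟩ := hgL
  have hoverlap : IsPencilMultiple a (K ∩ L) (u₁ - u₂) := by
    have := ((hgu₁.mono inter_subset_left).mul_left (hu₂.mono inter_subset_right)).sub
      ((hgu₂.mono inter_subset_right).mul_left (hu₁.mono inter_subset_left))
    exact this.congr (.of_eq (by ring))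
  obtain ⟨u, hu, huK, huL⟩ := h.exists_glue_mod_pencil hu₁ hu₂ hoverlap
  have hdefect : AnalyticOnNhd ℂ (g * u - 1) (K ∪ L) := (hg.mul hu).sub analyticOnNhd_const
  have hdefectK : IsPencilMultiple a K (g * u - 1) :=
    ((huK.mul_left (hg.mono subset_union_left)).add hgu₁).congr (.of_eq (by ring))
  have hdefectL : IsPencilMultiple a L (g * u - 1) :=
    ((huL.mul_left (hg.mono subset_union_right)).add hgu₂).congr (.of_eq (by ring))
  refine ⟨u * (1 - (g * u - 1)), hu.mul (analyticOnNhd_const.sub hdefect), ?_⟩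
  have hsq := hdefectK.sq_union h.isClosed_left h.isClosed_right hdefect hdefectL
  exact hsq.neg.congr (.of_eq (by ring))

lemma exists_mul_add_mul_eq_one_of_character (x y : A)
    (hxy : ∀ φ : WeakDual.characterSpace ℂ A, φ x = 0 → φ y ≠ 0) :
    ∃ u v : A, u * x + v * y = 1 := by
  rw [← Ideal.mem_span_pair, ← Ideal.eq_top_iff_one]
  by_contra hne
  obtain ⟨M, hM, hle⟩ := Ideal.exists_le_maximal _ hne
  exact hxy M.toCharacterSpace
    (M.toCharacterSpace_apply_eq_zero_of_mem (hle (Ideal.subset_span (by simp))))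
    (M.toCharacterSpace_apply_eq_zero_of_mem (hle (Ideal.subset_span (by simp))))

lemma isInvertibleModPencil_singleton {g : ℂ → A} {c : ℂ} (hg : AnalyticAt ℂ g c)
    (hφ : ∀ φ : WeakDual.characterSpace ℂ A, φ a = c → φ (g c) ≠ 0) :
    IsInvertibleModPencil a g {c} := by
  obtain ⟨v, u, hvu⟩ := exists_mul_add_mul_eq_one_of_character (pencil a c) (g c) fun φ hφc =>
    hφ φ (sub_eq_zero.1 (character_pencil φ a c ▸ hφc)).symm
  let q : ℂ → A := fun z => v * pencil a z + u * g z
  have hq : AnalyticAt ℂ q c := (analyticAt_const.mul (analyticOnNhd_pencil a univ c trivial)).add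
    (analyticAt_const.mul hg)
  have hqc : q c = (1 : Aˣ) := hvu
  have hq_inv : AnalyticAt ℂ (fun z => Ring.inverse (q z)) c :=
    (show AnalyticAt ℂ Ring.inverse (q c) from hqc ▸ analyticAt_inverse 1).comp hq
  have hq_unit : ∀ᶠ z in 𝓝 c, IsUnit (q z) :=
    hq.continuousAt.eventually (Units.isOpen.mem_nhds (hqc ▸ Units.isUnit 1))
  refine ⟨fun z => u * Ring.inverse (q z), ?_, fun z => -(v * Ring.inverse (q z)), ?_, ?_⟩
  · rintro z rfl
    exact analyticAt_const.mul hq_inv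
  · rintro z rfl
    exact (analyticAt_const.mul hq_inv).neg
  · rw [nhdsSet_singleton]
    filter_upwards [hq_unit] with z hz
    simp only [Pi.sub_apply, Pi.mul_apply, Pi.one_apply]
    linear_combination Ring.mul_inverse_cancel _ hz

theorem IsRectangle.isInvertibleModPencil {R : Set ℂ} (hR : IsRectangle R) {g : ℂ → A}
    (hg : AnalyticOnNhd ℂ g R)
    (hφ : ∀ φ : WeakDual.characterSpace ℂ A, φ a ∈ R → φ (g (φ a)) ≠ 0) :
    IsInvertibleModPencil a g R := by
  refine (hR.of_forall_singleton (P := fun K => AnalyticOnNhd ℂ g K ∧ IsInvertibleModPencil a g K)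
    ?_ ?_ ?_).2
  · rintro K ⟨hgK, u, hu, hgu⟩
    filter_upwards [eventually_smallSets_analyticOnNhd hgK, eventually_smallSets_analyticOnNhd hu,
      hgu.eventually_smallSets] with U hgU huU hguU using ⟨hgU, u, huU, hguU⟩
  · rintro K L hKL ⟨hgK, hgK'⟩ ⟨hgL, hgL'⟩
    have hgKL : AnalyticOnNhd ℂ g (K ∪ L) := fun z hz => hz.elim (hgK z) (hgL z)
    exact ⟨hgKL, .union hKL hgKL hgK' hgL'⟩
  · intro z hz
    refine ⟨fun w hw => hg w (eq_of_mem_singleton hw ▸ hz),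
      isInvertibleModPencil_singleton (hg z hz) ?_⟩
    rintro φ rfl
    exact hφ φ hz

end InvertibilityModPencil

section IdempotentsModPencil

open WeakDual
open scoped ContDiff

variable {A : Type*} [NormedCommRing A] [NormedAlgebra ℂ A]

/-- `E` is, near `K`, an idempotent modulo holomorphic multiples of the pencil of `a`, and its value
at `φ a` is sent by the character `φ` to the prescribed value `χ φ`. -/
structure IsIdempotentModPencil (a : A) (χ : C(characterSpace ℂ A, ℂ)) (K : Set ℂ) (E : ℂ → A) :
    Prop where
  analyticOnNhd : AnalyticOnNhd ℂ E K
  sq_sub_self : IsPencilMultiple a K (E ^ 2 - E)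
  character_apply : ∀ φ : characterSpace ℂ A, φ a ∈ K → φ (E (φ a)) = χ φ

variable {a : A} {χ : C(characterSpace ℂ A, ℂ)} {K L : Set ℂ} {E E₁ E₂ : ℂ → A}

lemma IsIdempotentModPencil.mono (hE : IsIdempotentModPencil a χ K E) (hLK : L ⊆ K) :
    IsIdempotentModPencil a χ L E :=
  ⟨hE.analyticOnNhd.mono hLK, hE.sq_sub_self.mono hLK,
    fun φ hφ => hE.character_apply φ (hLK hφ)⟩

lemma IsIdempotentModPencil.of_sub (hE₁ : IsIdempotentModPencil a χ K E₁)
    (hE : AnalyticOnNhd ℂ E K) (hsub : IsPencilMultiple a K (E - E₁)) :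
    IsIdempotentModPencil a χ K E where
  analyticOnNhd := hE
  sq_sub_self := by
    have := hsub.mul_left ((hE.add hE₁.analyticOnNhd).sub (analyticOnNhd_const (v := (1 : A))))
    refine (this.add hE₁.sq_sub_self).congr (.of_eq ?_)
    ext z
    simp only [Pi.add_apply, Pi.mul_apply, Pi.sub_apply, Pi.pow_apply]
    ring
  character_apply φ hφ := by
    rw [← hE₁.character_apply φ hφ, ← sub_eq_zero, ← map_sub]
    exact hsub.character_apply_eq_zero hφ

lemma eq_of_norm_sub_lt_one_of_isIdempotentElem {x y : ℂ} (hx : IsIdempotentElem x)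
    (hy : IsIdempotentElem y) (hxy : ‖x - y‖ < 1) : x = y := by
  rcases IsIdempotentElem.iff_eq_zero_or_one.1 hx with rfl | rfl <;>
    rcases IsIdempotentElem.iff_eq_zero_or_one.1 hy with rfl | rfl <;> simp at hxy ⊢

lemma isIdempotentElem_apply {X : Type*} [TopologicalSpace X] {f : C(X, ℂ)}
    (hf : IsIdempotentElem f) (x : X) : IsIdempotentElem (f x) :=
  DFunLike.congr_fun hf x

lemma continuous_character_apply (x : A) : Continuous fun φ : characterSpace ℂ A => φ x :=
  (gelfandTransform ℂ A x).continuous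

variable [CompleteSpace A]

/-- The difference `d` of two idempotents satisfies `d³ = d`, and here `1 - d²` is invertible. -/
lemma IsIdempotentModPencil.isPencilMultiple_sub (hK : IsRectangle K)
    (h₁ : IsIdempotentModPencil a χ K E₁) (h₂ : IsIdempotentModPencil a χ K E₂) :
    IsPencilMultiple a K (E₁ - E₂) := by
  have hd : AnalyticOnNhd ℂ (E₁ - E₂) K := h₁.analyticOnNhd.sub h₂.analyticOnNhd
  obtain ⟨u, hu, hinv⟩ : IsInvertibleModPencil a (1 - (E₁ - E₂) ^ 2) K := by
    refine hK.isInvertibleModPencil (analyticOnNhd_const.sub (hd.pow 2)) fun φ hφ => ?_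
    simp [h₁.character_apply φ hφ, h₂.character_apply φ hφ]
  have hcube : IsPencilMultiple a K ((E₁ - E₂) - (E₁ - E₂) ^ 3) := by
    have h₁' := h₁.sq_sub_self.mul_left (g := 3 * E₂ - E₁ - 1)
      (((analyticOnNhd_const (v := (3 : A))).mul h₂.analyticOnNhd |>.sub h₁.analyticOnNhd).sub
        analyticOnNhd_const)
    have h₂' := h₂.sq_sub_self.mul_left (g := E₂ + 1 - 3 * E₁)
      ((h₂.analyticOnNhd.add analyticOnNhd_const).sub
        ((analyticOnNhd_const (v := (3 : A))).mul h₁.analyticOnNhd))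
    exact (h₁'.add h₂').congr (.of_eq (by ring))
  exact ((hcube.mul_left hu).sub (hinv.mul_left hd)).congr (.of_eq (by ring))

/-- The polynomial `3 E² - 2 E³` fixes `0` and `1` to second order, which absorbs the square lost
in `IsPencilMultiple.sq_union`. -/
lemma IsIdempotentModPencil.exists_union (hχ : IsIdempotentElem χ) (h : AdjacentRectangles K L)
    (h₁ : IsIdempotentModPencil a χ K E₁) (h₂ : IsIdempotentModPencil a χ L E₂) :
    ∃ E, IsIdempotentModPencil a χ (K ∪ L) E := by
  obtain ⟨E, hE, hEK, hEL⟩ := h.exists_glue_mod_pencil h₁.analyticOnNhd h₂.analyticOnNhd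
    ((h₁.mono inter_subset_left).isPencilMultiple_sub h.isRectangle_inter
      (h₂.mono inter_subset_right))
  have hEK' := h₁.of_sub (hE.mono subset_union_left) hEK
  have hEL' := h₂.of_sub (hE.mono subset_union_right) hEL
  have hdefect : AnalyticOnNhd ℂ (E ^ 2 - E) (K ∪ L) := (hE.pow 2).sub hE
  have hsq := hEK'.sq_sub_self.sq_union h.isClosed_left h.isClosed_right hdefect hEL'.sq_sub_self
  refine ⟨3 * E ^ 2 - 2 * E ^ 3, ?_, ?_, fun φ hφ => ?_⟩
  · exact ((analyticOnNhd_const (v := (3 : A))).mul (hE.pow 2)).sub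
      ((analyticOnNhd_const (v := (2 : A))).mul (hE.pow 3))
  · have := hsq.mul_left (g := 4 * (E ^ 2 - E) - 3)
      (((analyticOnNhd_const (v := (4 : A))).mul hdefect).sub analyticOnNhd_const)
    exact this.congr (.of_eq (by ring))
  · have hEφ : φ (E (φ a)) = χ φ := hφ.elim (hEK'.character_apply φ) (hEL'.character_apply φ)
    have hsmooth : φ ((3 * E ^ 2 - 2 * E ^ 3 : ℂ → A) (φ a)) = 3 * χ φ ^ 2 - 2 * χ φ ^ 3 := by
      have hφ₂ : φ (2 : A) = 2 := map_ofNat φ 2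
      have hφ₃ : φ (3 : A) = 3 := map_ofNat φ 3
      simp [hEφ, hφ₂, hφ₃]
    rw [hsmooth]
    rcases IsIdempotentElem.iff_eq_zero_or_one.1 (isIdempotentElem_apply hχ φ) with h | h <;>
      rw [h] <;> norm_num

lemma continuousAt_character_apply_comp {f : characterSpace ℂ A → A} {φ : characterSpace ℂ A}
    (hf : ContinuousAt f φ) : ContinuousAt (fun ψ : characterSpace ℂ A => ψ (f ψ)) φ := by
  have hsmall : Tendsto (fun ψ : characterSpace ℂ A => ψ (f ψ - f φ)) (𝓝 φ) (𝓝 0) := by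
    refine squeeze_zero_norm (fun ψ => AlgHom.norm_apply_le_self_mul_norm_one ψ _) ?_
    simpa using (hf.tendsto.sub_const (f φ)).norm.mul_const ‖(1 : A)‖
  have := hsmall.add (continuous_character_apply (f φ)).continuousAt.tendsto
  simpa [ContinuousAt] using this

lemma IsIdempotentModPencil.eventually_smallSets (hχ : IsIdempotentElem χ)
    (hE : IsIdempotentModPencil a χ K E) :
    ∀ᶠ U in (𝓝ˢ K).smallSets, IsIdempotentModPencil a χ U E := by
  have hclosed : IsClosedMap fun φ : characterSpace ℂ A => φ a :=
    (continuous_character_apply a).isClosedMap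
  have hcharacter : ∀ᶠ z in 𝓝ˢ K, ∀ φ : characterSpace ℂ A, φ a = z → φ (E (φ a)) = χ φ := by
    refine eventually_nhdsSet_iff_forall.2 fun z hz => hclosed.eventually_nhds_fiber z ?_
    rintro φ rfl
    have ha : ContinuousAt (fun ψ : characterSpace ℂ A => ψ a) φ :=
      (continuous_character_apply a).continuousAt
    have hEa := continuousAt_character_apply_comp
      ((hE.analyticOnNhd _ hz).continuousAt.comp (f := fun ψ : characterSpace ℂ A => ψ a) ha)
    have hclose := (hEa.sub χ.continuous.continuousAt).norm.eventually_lt_const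
      (u := (1 : ℝ)) (by simp [hE.character_apply φ hz])
    have hzero := ha.eventually (eventually_nhdsSet_iff_forall.1
      hE.sq_sub_self.eventually_character_apply_eq_zero _ hz)
    filter_upwards [hclose, hzero] with ψ hψ hψ_zero
    refine eq_of_norm_sub_lt_one_of_isIdempotentElem ?_ (isIdempotentElem_apply hχ ψ) hψ
    simpa [sub_eq_zero, pow_two, IsIdempotentElem] using hψ_zero ψ rfl
  filter_upwards [eventually_smallSets_analyticOnNhd hE.analyticOnNhd,
    hE.sq_sub_self.eventually_smallSets, eventually_smallSets_forall.2 hcharacter]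
    with U hEU hsqU hφU using ⟨hEU, hsqU, fun φ hφ => hφU _ hφ φ rfl⟩

lemma exists_analyticAt_sq_eq {𝕜 : Type*} [RCLike 𝕜] (B : Type*) [NormedCommRing B]
    [NormedAlgebra 𝕜 B] [CompleteSpace B] :
    ∃ g : B → B, AnalyticAt 𝕜 g 1 ∧ g 1 = 1 ∧ ∀ᶠ x in 𝓝 1, g x ^ 2 = x := by
  have hsq : ContDiffAt 𝕜 ω (fun x : B => x ^ 2) 1 := contDiffAt_id.pow 2
  let L : B ≃L[𝕜] B := ContinuousLinearEquiv.smulLeft (Units.mk0 (2 : 𝕜) two_ne_zero)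
  have hL : HasFDerivAt (fun x : B => x ^ 2) (L : B →L[𝕜] B) 1 := by
    refine ((hasFDerivAt_id (𝕜 := 𝕜) (1 : B)).pow 2).congr_fderiv ?_
    ext x
    simp [L, two_smul, Units.smul_def, add_mul]
  refine ⟨hsq.localInverse hL (by simp), ?_, ?_, ?_⟩
  · simpa using (hsq.to_localInverse hL (by simp)).analyticAt
  · simpa using hsq.localInverse_apply_image hL (by simp)
  · have hright := (hsq.hasStrictFDerivAt' hL (by simp)).eventually_right_inverse
    rwa [one_pow] at hright

lemma exists_analyticAt_sq_mul_one_add_four_mul_eq_one {𝕜 : Type*} [RCLike 𝕜] (B : Type*)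
    [NormedCommRing B] [NormedAlgebra 𝕜 B] [CompleteSpace B] :
    ∃ s : B → B, AnalyticAt 𝕜 s 0 ∧ s 0 = 1 ∧ ∀ᶠ w in 𝓝 0, s w ^ 2 * (1 + 4 * w) = 1 := by
  obtain ⟨g, hg, hg_one, hg_sq⟩ := exists_analyticAt_sq_eq (𝕜 := 𝕜) B
  let q : B → B := fun w => 1 + 4 * w
  have hq : AnalyticAt 𝕜 q 0 := analyticAt_const.add (analyticAt_const.mul analyticAt_id)
  have hq_zero : q 0 = (1 : Bˣ) := by simp [q]
  have hq_inv : AnalyticAt 𝕜 (Ring.inverse ∘ q) 0 := (analyticAt_inverse 1).comp_of_eq hq hq_zero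
  have hq_inv_zero : (Ring.inverse ∘ q) 0 = 1 := by simp [q]
  refine ⟨g ∘ Ring.inverse ∘ q, hg.comp_of_eq hq_inv hq_inv_zero, by simp [q, hg_one], ?_⟩
  filter_upwards [hq.continuousAt.eventually (Units.isOpen.mem_nhds (hq_zero ▸ Units.isUnit 1)),
    hq_inv.continuousAt.eventually (hq_inv_zero ▸ hg_sq)] with w hw hw_sq
  exact hw_sq.symm ▸ Ring.inverse_mul_cancel _ hw

lemma exists_eventually_sq_mul_one_add_four_mul_eq_one_and_character (A : Type*) [NormedCommRing A]
    [NormedAlgebra ℂ A] [CompleteSpace A] :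
    ∃ s : A → A, ∀ᶠ w in 𝓝 0, AnalyticAt ℂ s w ∧ s w ^ 2 * (1 + 4 * w) = 1 ∧
      ∀ φ : characterSpace ℂ A, φ w = 0 → φ (s w) = 1 := by
  obtain ⟨s, hs, hs_zero, hs_sq⟩ := exists_analyticAt_sq_mul_one_add_four_mul_eq_one (𝕜 := ℂ) A
  have hs_near : ∀ᶠ w in 𝓝 (0 : A), ‖s w - 1‖ * ‖(1 : A)‖ < 2 :=
    ((hs.continuousAt.tendsto.sub_const 1).norm.mul_const _).eventually_lt_const (by simp [hs_zero])
  refine ⟨s, ?_⟩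
  filter_upwards [hs.eventually_analyticAt, hs_sq, hs_near] with w hsw hsw_sq hsw_near
  refine ⟨hsw, hsw_sq, fun φ hφw => ?_⟩
  have hφ_sq : φ (s w) ^ 2 = 1 := by simpa [hφw] using congrArg φ hsw_sq
  refine (sq_eq_one_iff.1 hφ_sq).resolve_right fun hneg => ?_
  have hφ_near := (AlgHom.norm_apply_le_self_mul_norm_one φ (s w - 1)).trans_lt hsw_near
  norm_num [hneg] at hφ_near

lemma sq_sub_self_of_sq_mul_one_add_four_mul_eq_one {R : Type*} [CommRing R] {h e s w y : R}
    (hh : 2 * h = 1) (hs : s ^ 2 * (1 + 4 * w) = 1) (hw : w = e ^ 2 - e - y) :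
    (h + (e - h) * s) ^ 2 - (h + (e - h) * s) = y * s ^ 2 := by
  linear_combination h ^ 2 * hs - s ^ 2 * hw +
    (-s ^ 2 * e - s ^ 2 * w * (2 * h + 1) + h + s * (e - h)) * hh

/-- An approximate idempotent `e` modulo `pencil a c` is corrected to `1/2 + (e - 1/2) * s(w)` with
`w = e² - e - pencil a z * v` and `s(w) = (1 + 4w)^(-1/2)`, because `(2e - 1)² = 1 + 4(e² - e)`. -/
lemma exists_isIdempotentModPencil_singleton (hχ : IsIdempotentElem χ) {c : ℂ} {e : A}
    (he : e ^ 2 - e ∈ closure (Ideal.span {pencil a c} : Set A))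
    (heχ : ∀ φ : characterSpace ℂ A, φ a = c → φ e = χ φ) :
    ∃ E, IsIdempotentModPencil a χ {c} E := by
  obtain ⟨s, hs⟩ := exists_eventually_sq_mul_one_add_four_mul_eq_one_and_character A
  obtain ⟨r, hr, hball⟩ := Metric.eventually_nhds_iff_ball.1 hs.eventually_nhds
  obtain ⟨_, hy, hdist⟩ := Metric.mem_closure_iff.1 he r hr
  obtain ⟨v, rfl⟩ := Ideal.mem_span_singleton.1 hy
  let w : ℂ → A := fun z => e ^ 2 - e - pencil a z * v
  have hw : AnalyticAt ℂ w c :=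
    analyticAt_const.sub ((analyticOnNhd_pencil a univ c trivial).mul analyticAt_const)
  have hs_near := hball (w c) (by simpa [w, dist_eq_norm] using hdist)
  obtain ⟨hsw, -, hφs⟩ := hs_near.self_of_nhds
  have hsw_comp : AnalyticAt ℂ (s ∘ w) c := hsw.comp hw
  have hhalf : 2 * algebraMap ℂ A (1 / 2) = 1 := by
    rw [← map_ofNat (algebraMap ℂ A) 2, ← map_mul, mul_one_div_cancel two_ne_zero, map_one]
  refine ⟨fun z => algebraMap ℂ A (1 / 2) + (e - algebraMap ℂ A (1 / 2)) * s (w z), ?_,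
    ⟨fun z => v * s (w z) ^ 2, ?_, ?_⟩, ?_⟩
  · rintro z rfl
    exact analyticAt_const.add (analyticAt_const.mul hsw_comp)
  · rintro z rfl
    exact analyticAt_const.mul (hsw_comp.pow 2)
  · rw [nhdsSet_singleton]
    filter_upwards [hw.continuousAt.eventually hs_near] with z hz
    exact (sq_sub_self_of_sq_mul_one_add_four_mul_eq_one hhalf hz.2.1 rfl).trans (mul_assoc _ _ _)
  · rintro φ rfl
    have hφw : φ (w (φ a)) = 0 := by
      simp only [w, map_sub, map_mul, map_pow, heχ φ rfl, character_pencil, sub_self, zero_mul]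
      linear_combination (isIdempotentElem_apply hχ φ).eq
    simp [hφs φ hφw, heχ φ rfl]

theorem IsRectangle.exists_isIdempotentModPencil {R : Set ℂ} (hR : IsRectangle R)
    (hχ : IsIdempotentElem χ) (hlocal : ∀ z ∈ R, ∃ E, IsIdempotentModPencil a χ {z} E) :
    ∃ E, IsIdempotentModPencil a χ R E :=
  hR.of_forall_singleton (P := fun K => ∃ E, IsIdempotentModPencil a χ K E)
    (fun _ ⟨E, hE⟩ => (hE.eventually_smallSets hχ).mono fun _ hEU => ⟨E, hEU⟩)
    (fun _ _ h ⟨_, h₁⟩ ⟨_, h₂⟩ => h₁.exists_union hχ h h₂) hlocal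

end IdempotentsModPencil

section Evaluation

open Real

variable {A : Type*} [NormedCommRing A] [NormedAlgebra ℂ A] {a : A}

lemma pencil_mul_resolvent {z : ℂ} (hz : z ∈ resolventSet ℂ a) :
    pencil a z * resolvent a z = 1 :=
  Ring.mul_inverse_cancel _ hz

lemma pencil_mul_inv_smul_mul_resolvent {ζ z : ℂ} (hζ : ζ ∈ resolventSet ℂ a) (hz : ζ - z ≠ 0)
    (x : A) : pencil a z * ((ζ - z)⁻¹ • (x * resolvent a ζ)) =
      (ζ - z)⁻¹ • x - x * resolvent a ζ := by
  have hpencil : pencil a z = pencil a ζ - algebraMap ℂ A (ζ - z) := by simp [pencil]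
  have hinv : algebraMap ℂ A (ζ - z)⁻¹ * algebraMap ℂ A (ζ - z) = 1 := by
    rw [← map_mul, inv_mul_cancel₀ hz, map_one]
  simp only [Algebra.smul_def, hpencil]
  linear_combination algebraMap ℂ A (ζ - z)⁻¹ * x * pencil_mul_resolvent hζ -
    x * resolvent a ζ * hinv

variable [CompleteSpace A]

lemma mem_resolventSet_of_norm_mul_norm_one_lt {r : ℝ} {z : ℂ} (hr : ‖a‖ * ‖(1 : A)‖ < r)
    (hz : r ≤ ‖z‖) : z ∈ resolventSet ℂ a :=
  spectrum.mem_resolventSet_of_norm_lt_mul (hr.trans_le hz)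

lemma analyticAt_resolvent {z : ℂ} (hz : z ∈ resolventSet ℂ a) :
    AnalyticAt ℂ (resolvent a) z :=
  (analyticAt_inverse hz.unit).comp_of_eq (analyticOnNhd_pencil a univ z trivial) hz.unit_spec.symm

lemma circleIntegral_mul_left {f : ℂ → A} {c : ℂ} {R : ℝ} (hf : CircleIntegrable f c R) (x : A) :
    (∮ z in C(c, R), x * f z) = x * ∮ z in C(c, R), f z := by
  simpa [circleIntegral] using
    (ContinuousLinearMap.mul ℂ A x).intervalIntegral_comp_comm hf.out

lemma analyticOnNhd_cauchyIntegral {F : Type*} [NormedAddCommGroup F] [NormedSpace ℂ F]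
    [CompleteSpace F] {f : ℂ → F} {c : ℂ} {R : ℝ} (hR : 0 < R) (hf : CircleIntegrable f c R) :
    AnalyticOnNhd ℂ (fun w => (2 * π * Complex.I : ℂ)⁻¹ • ∮ z in C(c, R), (z - w)⁻¹ • f z)
      (ball c R) := by
  lift R to NNReal using hR.le
  simpa only [Metric.eball_coe] using (hasFPowerSeriesOn_cauchy_integral hf hR).analyticOnNhd

/-- The constant is the holomorphic functional calculus `E(a)`, the mean of `E * resolvent a`. -/
lemma exists_const_sub_isPencilMultiple {R : ℝ} (hR : ‖a‖ * ‖(1 : A)‖ < R) {E : ℂ → A}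
    (hE : AnalyticOnNhd ℂ E (closedBall 0 R)) :
    ∃ e : A, IsPencilMultiple a (ball 0 R) (E - Function.const ℂ e) := by
  have hR0 : 0 < R := lt_of_le_of_lt (by positivity) hR
  have hres : ∀ ζ ∈ sphere (0 : ℂ) R, ζ ∈ resolventSet ℂ a := fun ζ hζ =>
    mem_resolventSet_of_norm_mul_norm_one_lt hR (mem_sphere_zero_iff_norm.1 hζ).ge
  have hcont : ContinuousOn (fun ζ => E ζ * resolvent a ζ) (sphere 0 R) :=
    (hE.continuousOn.mono sphere_subset_closedBall).mul fun ζ hζ =>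
      (analyticAt_resolvent (hres ζ hζ)).continuousAt.continuousWithinAt
  have hint := hcont.circleIntegrable hR0.le
  refine ⟨(2 * π * Complex.I : ℂ)⁻¹ • ∮ ζ in C(0, R), E ζ * resolvent a ζ, _,
    analyticOnNhd_cauchyIntegral hR0 hint, ?_⟩
  filter_upwards [isOpen_ball.mem_nhdsSet_self] with z hz
  have hne : ∀ ζ ∈ sphere (0 : ℂ) R, ζ - z ≠ 0 := fun ζ hζ =>
    sub_ne_zero.2 (sphere_disjoint_ball.ne_of_mem hζ hz)
  have hinv : ContinuousOn (fun ζ => (ζ - z)⁻¹) (sphere 0 R) := ContinuousOn.inv₀ (by fun_prop) hne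
  have hcauchy := hE.differentiableOn.circleIntegral_sub_inv_smul hz
  have hsplit :
      pencil a z * (∮ ζ in C(0, R), (ζ - z)⁻¹ • (E ζ * resolvent a ζ)) =
        (∮ ζ in C(0, R), (ζ - z)⁻¹ • E ζ) - ∮ ζ in C(0, R), E ζ * resolvent a ζ := by
    have hint_inv : CircleIntegrable (fun ζ => (ζ - z)⁻¹ • E ζ) 0 R :=
      (hinv.smul (hE.continuousOn.mono sphere_subset_closedBall)).circleIntegrable hR0.le
    have hint_res : CircleIntegrable (fun ζ => (ζ - z)⁻¹ • (E ζ * resolvent a ζ)) 0 R :=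
      (hinv.smul hcont).circleIntegrable hR0.le
    rw [← circleIntegral_mul_left hint_res, ← circleIntegral.integral_sub hint_inv hint]
    exact circleIntegral.integral_congr hR0.le fun ζ hζ =>
      pencil_mul_inv_smul_mul_resolvent (hres ζ hζ) (hne ζ hζ) (E ζ)
  rw [Pi.mul_apply, mul_smul_comm, hsplit, hcauchy, smul_sub,
    inv_smul_smul₀ Complex.two_pi_I_ne_zero, Pi.sub_apply, Function.const_apply]

/-- The quotient continues by `resolvent a * y` to an entire function vanishing at infinity. -/
lemma eq_zero_of_isPencilMultiple_const {r : ℝ} (hr : ‖a‖ * ‖(1 : A)‖ < r) {y : A}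
    (hy : IsPencilMultiple a (closedBall 0 r) (Function.const ℂ y)) : y = 0 := by
  obtain ⟨v, hv, hvy⟩ := hy
  have hr0 : 0 ≤ r := le_trans (by positivity) hr.le
  have hres : AnalyticOnNhd ℂ (fun z => resolvent a z * y) {z | r ≤ ‖z‖} := fun z hz =>
    (analyticAt_resolvent (mem_resolventSet_of_norm_mul_norm_one_lt hr hz)).mul analyticAt_const
  have hoverlap : v =ᶠ[𝓝ˢ (closedBall 0 r ∩ {z | r ≤ ‖z‖})] fun z => resolvent a z * y := by
    have hnear : ∀ᶠ z in 𝓝ˢ {z : ℂ | r ≤ ‖z‖}, z ∈ resolventSet ℂ a :=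
      (spectrum.isOpen_resolventSet a).mem_nhdsSet.2 fun z hz =>
        mem_resolventSet_of_norm_mul_norm_one_lt hr hz
    filter_upwards [hvy.filter_mono (nhdsSet_mono inter_subset_left),
      hnear.filter_mono (nhdsSet_mono inter_subset_right)] with z hyz hz
    simp only [Function.const_apply, Pi.mul_apply] at hyz
    linear_combination (-v z) * pencil_mul_resolvent hz - resolvent a z * hyz
  obtain ⟨w, hw, hwv, hw_res⟩ := exists_analyticOnNhd_union isClosed_closedBall
    (isClosed_le continuous_const continuous_norm) hv hres hoverlap
  have hw_entire : Differentiable ℂ w := fun z =>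
    (hw z (by simpa using le_total ‖z‖ r)).differentiableAt
  have hlim : Tendsto w (cocompact ℂ) (𝓝 0) := by
    rw [← Metric.cobounded_eq_cocompact]
    have hlim_res := (spectrum.resolvent_tendsto_cobounded (𝕜 := ℂ) a).mul_const y
    rw [zero_mul] at hlim_res
    refine hlim_res.congr' ?_
    filter_upwards [tendsto_norm_cobounded_atTop.eventually_ge_atTop r] with z hz
    exact hw_res.self_of_nhdsSet hz
  have h0 : (0 : ℂ) ∈ closedBall (0 : ℂ) r := mem_closedBall_self hr0
  calc y = pencil a 0 * v 0 := hvy.self_of_nhdsSet h0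
    _ = pencil a 0 * w 0 := by rw [hwv.self_of_nhdsSet h0]
    _ = 0 := by rw [hw_entire.apply_eq_of_tendsto_cocompact 0 hlim, mul_zero]

lemma IsIdempotentModPencil.exists_isIdempotentElem
    {χ : C(WeakDual.characterSpace ℂ A, ℂ)} {E : ℂ → A} {R : ℝ} (hR : ‖a‖ * ‖(1 : A)‖ < R)
    (hE : IsIdempotentModPencil a χ (closedBall 0 R) E) :
    ∃ e : A, IsIdempotentElem e ∧ ∀ φ, χ φ = φ e := by
  obtain ⟨e, he⟩ := exists_const_sub_isPencilMultiple hR hE.analyticOnNhd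
  obtain ⟨r, har, hrR⟩ := exists_between hR
  have hEr := hE.mono (closedBall_subset_closedBall hrR.le)
  have her := he.mono (closedBall_subset_ball hrR)
  have hdefect : IsPencilMultiple a (closedBall 0 r) (Function.const ℂ (e ^ 2 - e)) := by
    have := her.mul_left (g := E + Function.const ℂ e - 1)
      ((hEr.analyticOnNhd.add analyticOnNhd_const).sub analyticOnNhd_const)
    refine (hEr.sq_sub_self.sub this).congr (.of_eq ?_)
    ext z
    simp only [Pi.sub_apply, Pi.mul_apply, Pi.add_apply, Pi.pow_apply, Pi.one_apply,
      Function.const_apply]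
    ring
  have he_idem : e ^ 2 - e = 0 := eq_zero_of_isPencilMultiple_const har hdefect
  refine ⟨e, by rwa [IsIdempotentElem, ← pow_two, ← sub_eq_zero], fun φ => ?_⟩
  have hφ : φ a ∈ closedBall (0 : ℂ) r := mem_closedBall_zero_iff.2
    ((AlgHom.norm_apply_le_self_mul_norm_one φ a).trans har.le)
  have hφe := her.character_apply_eq_zero hφ
  rwa [Pi.sub_apply, map_sub, sub_eq_zero, hEr.character_apply φ hφ] at hφe

end Evaluation

section Shilov

universe u

open WeakDual

variable {A B : Type*} [NormedCommRing A] [NormedAlgebra ℂ A]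

lemma exists_isIdempotentElem_of_constant_idempotent {χ : C(characterSpace ℂ A, ℂ)}
    (hχ : IsIdempotentElem χ) (hconst : ∀ φ ψ, χ φ = χ ψ) :
    ∃ e : A, IsIdempotentElem e ∧ ∀ φ, χ φ = φ e := by
  by_cases h : ∃ φ, χ φ = 1
  · obtain ⟨φ, hφ⟩ := h
    exact ⟨1, .one, fun ψ => by rw [map_one, ← hφ, hconst]⟩
  · refine ⟨0, .zero, fun φ => ?_⟩
    rw [map_zero]
    exact (IsIdempotentElem.iff_eq_zero_or_one.1 (isIdempotentElem_apply hχ φ)).resolve_right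
      fun hφ => h ⟨φ, hφ⟩

lemma character_apply_eq_zero_of_mem_closure_span_pencil {a x : A} {c : ℂ}
    (hx : x ∈ closure (Ideal.span {pencil a c} : Set A)) {φ : characterSpace ℂ A} (hφ : φ a = c) :
    φ x = 0 := by
  refine closure_minimal (t := {x | φ x = 0}) (fun y hy => ?_)
    (isClosed_eq (map_continuous φ) continuous_const) hx
  obtain ⟨v, rfl⟩ := Ideal.mem_span_singleton'.1 hy
  simp [character_pencil, hφ]

variable [CompleteSpace A] [NormedCommRing B] [NormedAlgebra ℂ B]

/-- The map of character spaces `ψ ↦ ψ ∘ f` induced by a homomorphism `f` of Banach algebras. -/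
def characterPullback (f : A →ₐ[ℂ] B) : C(characterSpace ℂ B, characterSpace ℂ A) where
  toFun ψ := CharacterSpace.equivAlgHom.symm ((CharacterSpace.toAlgHom ψ).comp f)
  continuous_toFun := (continuous_of_continuous_eval fun a =>
    (WeakDual.eval_continuous (f a)).comp continuous_subtype_val).subtype_mk _

lemma characterPullback_apply (f : A →ₐ[ℂ] B) (ψ : characterSpace ℂ B) (a : A) :
    characterPullback f ψ a = ψ (f a) :=
  rfl

variable {I : Ideal A} [IsClosed (I : Set A)] {a : A} {c : ℂ}

lemma characterPullback_mk_apply_eq (hI : pencil a c ∈ I) (ψ : characterSpace ℂ (A ⧸ I)) :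
    characterPullback (Ideal.Quotient.mkₐ ℂ I) ψ a = c := by
  have hψ := characterPullback_apply (Ideal.Quotient.mkₐ ℂ I) ψ (pencil a c)
  rw [Ideal.Quotient.mkₐ_eq_mk, Ideal.Quotient.eq_zero_iff_mem.2 hI, map_zero, character_pencil,
    sub_eq_zero] at hψ
  exact hψ.symm

lemma exists_characterPullback_mk_eq {φ : characterSpace ℂ A} (hφ : ∀ x ∈ I, φ x = 0) :
    ∃ ψ, characterPullback (Ideal.Quotient.mkₐ ℂ I) ψ = φ :=
  ⟨CharacterSpace.equivAlgHom.symm (Ideal.Quotient.liftₐ I (CharacterSpace.toAlgHom φ) hφ),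
    CharacterSpace.ext fun _ => rfl⟩

lemma exists_isIdempotentModPencil_singleton_of_quotient
    (hI : (I : Set A) = closure (Ideal.span {pencil a c} : Set A)) {χ : C(characterSpace ℂ A, ℂ)}
    (hχ : IsIdempotentElem χ) {q : A ⧸ I} (hq : IsIdempotentElem q)
    (hqχ : ∀ ψ, χ (characterPullback (Ideal.Quotient.mkₐ ℂ I) ψ) = ψ q) :
    ∃ E, IsIdempotentModPencil a χ {c} E := by
  obtain ⟨e, rfl⟩ := Ideal.Quotient.mk_surjective q
  refine exists_isIdempotentModPencil_singleton (e := e) hχ ?_ fun φ hφ => ?_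
  · rw [← hI, SetLike.mem_coe, ← Ideal.Quotient.eq_zero_iff_mem, map_sub, map_pow, sub_eq_zero,
      pow_two]
    exact hq
  · obtain ⟨ψ, rfl⟩ := exists_characterPullback_mk_eq (I := I) fun x hx =>
      character_apply_eq_zero_of_mem_closure_span_pencil (hI ▸ hx) hφ
    exact (hqχ ψ).symm

lemma exists_isRectangle_superset_closedBall (R : ℝ) :
    ∃ S, IsRectangle S ∧ closedBall 0 R ⊆ S := by
  rcases lt_or_ge R 0 with hR | hR
  · exact ⟨_, ⟨0, 0, 0, 0, le_rfl, le_rfl, rfl⟩, by simp [closedBall_eq_empty.2 hR]⟩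
  refine ⟨_, ⟨-R, R, -R, R, by linarith, by linarith, rfl⟩, fun z hz => ?_⟩
  rw [mem_closedBall_zero_iff] at hz
  exact ⟨abs_le.1 ((Complex.abs_re_le_norm z).trans hz),
    abs_le.1 ((Complex.abs_im_le_norm z).trans hz)⟩

/-- **Shilov's idempotent theorem** for an idempotent `χ` on the character space which factors
through the joint spectrum of `a 0, …, a (k - 1)`. The induction passes to the quotients by
`pencil (a 0) c`, one for each `c ∈ ℂ`. -/
theorem exists_isIdempotentElem_of_idempotent_on_characterSpace (k : ℕ) :
    ∀ (A : Type u) [NormedCommRing A] [NormedAlgebra ℂ A] [CompleteSpace A] (a : Fin k → A)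
      (χ : C(characterSpace ℂ A, ℂ)), IsIdempotentElem χ →
      (∀ φ ψ : characterSpace ℂ A, (∀ i, φ (a i) = ψ (a i)) → χ φ = χ ψ) →
      ∃ e : A, IsIdempotentElem e ∧ ∀ φ, χ φ = φ e := by
  induction k with
  | zero =>
    intro A _ _ _ a χ hχ hsep
    exact exists_isIdempotentElem_of_constant_idempotent hχ fun φ ψ => hsep φ ψ fun i => i.elim0
  | succ k ih =>
    intro A _ _ _ a χ hχ hsep
    have hlocal (c : ℂ) : ∃ E, IsIdempotentModPencil (a 0) χ {c} E := by
      let I : Ideal A := (Ideal.span {pencil (a 0) c}).closure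
      have : IsClosed (I : Set A) := isClosed_closure
      have hI : pencil (a 0) c ∈ I := subset_closure (Ideal.mem_span_singleton_self _)
      let π : A →ₐ[ℂ] A ⧸ I := Ideal.Quotient.mkₐ ℂ I
      obtain ⟨q, hq, hqχ⟩ := ih (A ⧸ I) (fun i => π (a i.succ)) (χ.comp (characterPullback π))
        (ContinuousMap.ext fun ψ => isIdempotentElem_apply hχ _) fun ψ₁ ψ₂ h =>
          hsep _ _ (Fin.cases (by simp only [π, characterPullback_mk_apply_eq hI]) h)
      exact exists_isIdempotentModPencil_singleton_of_quotient rfl hχ hq hqχ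
    obtain ⟨R, hR⟩ := exists_gt (‖a 0‖ * ‖(1 : A)‖)
    obtain ⟨S, hS, hRS⟩ := exists_isRectangle_superset_closedBall R
    obtain ⟨E, hE⟩ := hS.exists_isIdempotentModPencil hχ fun c _ => hlocal c
    exact (hE.mono hRS).exists_isIdempotentElem hR

end Shilov

section HolomorphicFunctions

variable {n : ℕ} {Ω : Set (CSpace n)}

/-- The algebra `𝒪(Ω)` of holomorphic functions on `Ω`, whose underlying set is `OFun Ω`. -/
def holomorphicSubalgebra (Ω : Set (CSpace n)) : Subalgebra ℂ C(Ω, ℂ) where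
  carrier := OFun Ω
  mul_mem' := by
    rintro _ _ ⟨f, hf, hfx⟩ ⟨g, hg, hgx⟩
    exact ⟨f * g, hf.mul hg, fun x => congrArg₂ (· * ·) (hfx x) (hgx x)⟩
  add_mem' := by
    rintro _ _ ⟨f, hf, hfx⟩ ⟨g, hg, hgx⟩
    exact ⟨f + g, hf.add hg, fun x => congrArg₂ (· + ·) (hfx x) (hgx x)⟩
  algebraMap_mem' c := ⟨fun _ => c, differentiableOn_const c, fun _ => rfl⟩

/-- A function on `ℂⁿ` which is holomorphic on `Ω`, as an element of `𝒪(Ω)`. -/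
def toHolomorphic (f : CSpace n → ℂ) (hf : DifferentiableOn ℂ f Ω) : holomorphicSubalgebra Ω :=
  ⟨⟨Ω.domRestrict f, hf.continuousOn.domRestrict⟩, f, hf, fun _ => rfl⟩

/-- The restriction to `Ω` of a linear functional, as an element of `𝒪(Ω)`. -/
def linearHolomorphic (Ω : Set (CSpace n)) (L : CSpace n →L[ℂ] ℂ) : holomorphicSubalgebra Ω :=
  toHolomorphic L L.differentiableOn

/-- The point of `ℂⁿ` whose coordinates are the values of `θ` at the coordinate functions. -/
def algHomPoint (θ : holomorphicSubalgebra Ω →ₐ[ℂ] ℂ) : CSpace n :=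
  WithLp.toLp 2 fun i => θ (linearHolomorphic Ω (EuclideanSpace.proj i))

variable (θ : holomorphicSubalgebra Ω →ₐ[ℂ] ℂ)

lemma algHom_linearHolomorphic (L : CSpace n →L[ℂ] ℂ) :
    θ (linearHolomorphic Ω L) = L (algHomPoint θ) := by
  have apply_eq_sum (v : CSpace n) : L v = ∑ i, v i • L (EuclideanSpace.single i 1) := by
    conv_lhs => rw [← (EuclideanSpace.basisFun (Fin n) ℂ).sum_repr v]
    simp
  have hsum : linearHolomorphic Ω L = ∑ i, L (EuclideanSpace.single i 1) •
      linearHolomorphic Ω (EuclideanSpace.proj i) := by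
    refine Subtype.ext (ContinuousMap.ext fun x => (apply_eq_sum x).trans ?_)
    simp only [AddSubmonoidClass.coe_finsetSum, ContinuousMap.sum_apply]
    exact Finset.sum_congr rfl fun i _ => mul_comm _ _
  rw [hsum, map_sum, apply_eq_sum]
  exact Finset.sum_congr rfl fun i _ => (map_smul θ _ _).trans (mul_comm _ _)

lemma algHom_sub_mul_eq_zero (L : CSpace n →L[ℂ] ℂ) (g : holomorphicSubalgebra Ω) :
    θ ((linearHolomorphic Ω L - algebraMap ℂ _ (L (algHomPoint θ))) * g) = 0 := by
  have hsub : θ (linearHolomorphic Ω L - algebraMap ℂ _ (L (algHomPoint θ))) = 0 := by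
    refine (map_sub θ _ _).trans ?_
    rw [algHom_linearHolomorphic, AlgHom.commutes, Algebra.algebraMap_self_apply, sub_self]
  rw [map_mul, hsub, zero_mul]

/-- Otherwise a separating functional `L` would make `L - L p` a unit in the kernel of `θ`. -/
lemma algHomPoint_mem (hΩ : IsOpen Ω) (hc : Convex ℝ Ω) : algHomPoint θ ∈ Ω := by
  by_contra hp
  set p := algHomPoint θ
  obtain ⟨L, hL⟩ := RCLike.geometric_hahn_banach_open_point (𝕜 := ℂ) hc hΩ hp
  have ne_zero : ∀ x ∈ Ω, L x - L p ≠ 0 := fun x hx h =>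
    (hL x hx).ne (congrArg RCLike.re (sub_eq_zero.1 h))
  have inv_holo : DifferentiableOn ℂ (fun x => (L x - L p)⁻¹) Ω :=
    (L.differentiableOn.sub_const _).inv ne_zero
  have hone : (linearHolomorphic Ω L - algebraMap ℂ _ (L p)) * toHolomorphic _ inv_holo = 1 :=
    Subtype.ext (ContinuousMap.ext fun x => mul_inv_cancel₀ (ne_zero x x.2))
  have hzero := algHom_sub_mul_eq_zero θ L (toHolomorphic _ inv_holo)
  rw [hone, map_one] at hzero
  exact one_ne_zero hzero

/-- On a convex domain every character of `𝒪(Ω)` is a point evaluation: by Hadamard's lemma it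
kills `f - f p`. -/
theorem algHom_apply_eq (hΩ : IsOpen Ω) (hc : Convex ℝ Ω) {f : CSpace n → ℂ}
    (hf : DifferentiableOn ℂ f Ω) : θ (toHolomorphic f hf) = f (algHomPoint θ) := by
  set p := algHomPoint θ
  obtain ⟨g, hg, hfg⟩ := exists_eq_add_sum_repr_smul (EuclideanSpace.basisFun (Fin n) ℂ).toBasis
    hΩ (hc.starConvex (algHomPoint_mem θ hΩ hc)) hf
  have hexp : toHolomorphic f hf = algebraMap ℂ _ (f p) + ∑ i,
      (linearHolomorphic Ω (EuclideanSpace.proj i) - algebraMap ℂ _ (p i)) *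
        toHolomorphic (g i) (hg i) := by
    refine Subtype.ext (ContinuousMap.ext fun x => (hfg x x.2).trans ?_)
    simp only [AddMemClass.coe_add, AddSubmonoidClass.coe_finsetSum, ContinuousMap.add_apply,
      ContinuousMap.sum_apply, OrthonormalBasis.coe_toBasis_repr_apply,
      EuclideanSpace.basisFun_repr]
    rfl
  rw [hexp, map_add, map_sum, AlgHom.commutes, Algebra.algebraMap_self_apply]
  exact add_eq_left.2 (Finset.sum_eq_zero fun i _ =>
    algHom_sub_mul_eq_zero θ (EuclideanSpace.proj i) _)

end HolomorphicFunctions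

section UniformClosure

open WeakDual

variable {n : ℕ} {Ω K : Set (CSpace n)} [CompactSpace K] (hKΩ : K ⊆ Ω)

/-- The restriction homomorphism `𝒪(Ω) → C(K, ℂ)`. -/
def restrictHolomorphic {K : Set (CSpace n)} (hKΩ : K ⊆ Ω) :
    holomorphicSubalgebra Ω →ₐ[ℂ] C(K, ℂ) :=
  (ContinuousMap.compRightAlgHom ℂ ℂ ⟨inclusion hKΩ, continuous_inclusion hKΩ⟩).comp
    (holomorphicSubalgebra Ω).val

/-- The uniform closure on `K` of the holomorphic functions on `Ω`, a Banach algebra. -/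
abbrev uniformClosure : Subalgebra ℂ C(K, ℂ) :=
  (restrictHolomorphic hKΩ).range.topologicalClosure

instance : CompleteSpace (uniformClosure hKΩ) :=
  (restrictHolomorphic hKΩ).range.isClosed_topologicalClosure.completeSpace_coe

/-- The restriction homomorphism `𝒪(Ω) → C(K, ℂ)`, with values in the uniform closure. -/
def toUniformClosure : holomorphicSubalgebra Ω →ₐ[ℂ] uniformClosure hKΩ :=
  (restrictHolomorphic hKΩ).codRestrict _ fun f =>
    Subalgebra.le_topologicalClosure _ ⟨f, rfl⟩

variable {hKΩ}

/-- The point of `ℂⁿ` whose coordinates are the values of `φ` at the coordinate functions. -/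
def characterPoint (φ : characterSpace ℂ (uniformClosure hKΩ)) : CSpace n :=
  algHomPoint ((CharacterSpace.toAlgHom φ).comp (toUniformClosure hKΩ))

lemma continuous_characterPoint :
    Continuous (characterPoint : characterSpace ℂ (uniformClosure hKΩ) → CSpace n) :=
  (PiLp.continuous_toLp 2 _).comp (continuous_pi fun _ => continuous_character_apply _)

lemma norm_character_apply_le_iSup (φ : characterSpace ℂ (uniformClosure hKΩ))
    (f : uniformClosure hKΩ) : ‖φ f‖ ≤ ⨆ x, ‖(f : C(K, ℂ)) x‖ := by
  have norm_one_le : ‖(1 : C(K, ℂ))‖ ≤ 1 := (ContinuousMap.norm_le _ zero_le_one).2 (by simp)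
  rw [← ContinuousMap.norm_eq_iSup_norm]
  exact (AlgHom.norm_apply_le_self_mul_norm_one φ f).trans
    (mul_le_of_le_one_right (norm_nonneg f) norm_one_le)

lemma characterPoint_mem_OHull (hΩ : IsOpen Ω) (hc : Convex ℝ Ω)
    (φ : characterSpace ℂ (uniformClosure hKΩ)) : characterPoint φ ∈ OHull Ω K := by
  refine ⟨algHomPoint_mem _ hΩ hc, fun f hf => ?_⟩
  rw [characterPoint, ← algHom_apply_eq _ hΩ hc hf]
  exact norm_character_apply_le_iSup φ _

/-- Evaluation at a point of `K`, as a character of the uniform closure. -/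
def evalCharacter (hKΩ : K ⊆ Ω) (x : K) : characterSpace ℂ (uniformClosure hKΩ) :=
  CharacterSpace.equivAlgHom.symm ((ContinuousMap.evalAlgHom ℂ ℂ x).comp (uniformClosure hKΩ).val)

end UniformClosure

section Separation

open WeakDual

lemma isClopen_preimage_of_forall_mem_union {X Y : Type*} [TopologicalSpace X]
    [TopologicalSpace Y] {f : X → Y} {K L : Set Y} (hf : Continuous f) (hK : IsClosed K)
    (hL : IsClosed L) (hKL : Disjoint K L) (hmem : ∀ x, f x ∈ K ∪ L) : IsClopen (f ⁻¹' L) := by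
  have hcompl : f ⁻¹' L = (f ⁻¹' K)ᶜ := Subset.antisymm
    (fun _ hxL hxK => disjoint_left.1 hKL hxK hxL) fun x hxK => (hmem x).resolve_left hxK
  exact ⟨hL.preimage hf, hcompl ▸ (hK.preimage hf).isOpen_compl⟩

variable {n : ℕ} {Ω K L : Set (CSpace n)}

/-- `L` is separated from `K` by holomorphic functions on `Ω`: the function equal to `0` on `K` and
to `1` on `L` is a uniform limit of such functions. -/
def HolomorphicallySeparated (Ω K L : Set (CSpace n)) : Prop :=
  ∀ ε > 0, ∃ f : CSpace n → ℂ, DifferentiableOn ℂ f Ω ∧ (∀ x ∈ K, ‖f x‖ < ε) ∧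
    ∀ x ∈ L, ‖f x - 1‖ < ε

lemma exists_uniformClosure_eq_indicator (hΩ : IsOpen Ω) (hc : Convex ℝ Ω) (hK : IsClosed K)
    (hL : IsClosed L) (hKL : Disjoint K L) [CompactSpace ↥(K ∪ L)] (hKLΩ : K ∪ L ⊆ Ω)
    (hhull : OHull Ω (K ∪ L) = K ∪ L) :
    ∃ e : uniformClosure hKLΩ, ∀ x, (e : C(↥(K ∪ L), ℂ)) x = L.indicator 1 (x : CSpace n) := by
  have hclopen := isClopen_preimage_of_forall_mem_union continuous_characterPoint hK hL hKL
    fun φ : characterSpace ℂ (uniformClosure hKLΩ) =>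
      hhull.subset (characterPoint_mem_OHull hΩ hc φ)
  let χ : C(characterSpace ℂ (uniformClosure hKLΩ), ℂ) :=
    ⟨fun φ => L.indicator 1 (characterPoint φ), hclopen.continuous_indicator continuous_one⟩
  have hχ : IsIdempotentElem χ := ContinuousMap.ext fun φ => by
    change L.indicator 1 _ * L.indicator 1 _ = L.indicator (1 : CSpace n → ℂ) (characterPoint φ)
    by_cases hφ : characterPoint φ ∈ L <;> simp [hφ]
  obtain ⟨e, -, he⟩ := exists_isIdempotentElem_of_idempotent_on_characterSpace n _
    (fun i => toUniformClosure hKLΩ (linearHolomorphic Ω (EuclideanSpace.proj i))) χ hχ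
    fun φ ψ h => congrArg (L.indicator (1 : CSpace n → ℂ)) (PiLp.ext h)
  exact ⟨e, fun x => (he (evalCharacter hKLΩ x)).symm⟩

theorem holomorphicallySeparated_of_OHull_union_eq (hΩ : IsOpen Ω) (hc : Convex ℝ Ω)
    (hK : IsCompact K) (hL : IsCompact L) (hKL : Disjoint K L) (hKLΩ : K ∪ L ⊆ Ω)
    (hhull : OHull Ω (K ∪ L) = K ∪ L) : HolomorphicallySeparated Ω K L := by
  intro ε hε
  have : CompactSpace ↥(K ∪ L) := isCompact_iff_compactSpace.1 (hK.union hL)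
  obtain ⟨e, he⟩ :=
    exists_uniformClosure_eq_indicator hΩ hc hK.isClosed hL.isClosed hKL hKLΩ hhull
  obtain ⟨_, ⟨⟨g, f, hf, hgf⟩, rfl⟩, hg⟩ := Metric.mem_closure_iff.1 e.2 ε hε
  have norm_sub_lt (x : ↥(K ∪ L)) : ‖f x - L.indicator 1 (x : CSpace n)‖ < ε := by
    rw [← he, ← dist_eq_norm, dist_comm, ← hgf ⟨x, hKLΩ x.2⟩]
    exact (ContinuousMap.dist_apply_le_dist x).trans_lt hg
  refine ⟨f, hf, fun x hx => ?_, fun x hx => ?_⟩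
  · simpa only [indicator_of_notMem (disjoint_left.1 hKL hx), sub_zero] using
      norm_sub_lt ⟨x, Or.inl hx⟩
  · simpa only [indicator_of_mem hx, Pi.one_apply] using norm_sub_lt ⟨x, Or.inr hx⟩

end Separation

section HolomorphicHull

variable {n : ℕ} {Ω K L : Set (CSpace n)}

lemma norm_le_of_mem_OHull {x : CSpace n} (hx : x ∈ OHull Ω K) {f : CSpace n → ℂ}
    (hf : DifferentiableOn ℂ f Ω) {C : ℝ} (hC : 0 ≤ C) (h : ∀ y ∈ K, ‖f y‖ ≤ C) : ‖f x‖ ≤ C :=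
  (hx.2 f hf).trans (Real.iSup_le (fun y => h y y.2) hC)

lemma norm_le_iSup_of_isCompact (hK : IsCompact K) (hKΩ : K ⊆ Ω) {f : CSpace n → ℂ}
    (hf : DifferentiableOn ℂ f Ω) {x : CSpace n} (hx : x ∈ K) : ‖f x‖ ≤ ⨆ y : K, ‖f ↑y‖ := by
  obtain ⟨C, hC⟩ := hK.exists_bound_of_continuousOn (hf.continuousOn.mono hKΩ)
  exact le_ciSup (f := fun y : K => ‖f ↑y‖) ⟨C, forall_mem_range.2 fun y => hC y y.2⟩ ⟨x, hx⟩

lemma subset_OHull (hK : IsCompact K) (hKΩ : K ⊆ Ω) : K ⊆ OHull Ω K := fun _ hx =>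
  ⟨hKΩ hx, fun _ hf => norm_le_iSup_of_isCompact hK hKΩ hf hx⟩

lemma exists_apply_eq_one_and_forall_norm_lt (hK : IsCompact K) (hKΩ : K ⊆ Ω) {x : CSpace n}
    (hxΩ : x ∈ Ω) (hx : x ∉ OHull Ω K) {ε : ℝ} (hε : 0 < ε) :
    ∃ f : CSpace n → ℂ, DifferentiableOn ℂ f Ω ∧ f x = 1 ∧ ∀ y ∈ K, ‖f y‖ < ε := by
  obtain ⟨f, hf, hlt⟩ :
      ∃ f : CSpace n → ℂ, DifferentiableOn ℂ f Ω ∧ ⨆ y : K, ‖f ↑y‖ < ‖f x‖ := by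
    by_contra! h
    exact hx ⟨hxΩ, h⟩
  have hpos : 0 < ‖f x‖ := (Real.iSup_nonneg fun _ => norm_nonneg _).trans_lt hlt
  obtain ⟨N, hN⟩ := exists_pow_lt_of_lt_one hε ((div_lt_one hpos).2 hlt)
  refine ⟨fun y => (f y / f x) ^ N, by fun_prop, ?_, fun y hy => ?_⟩
  · simp only [div_self (norm_pos_iff.1 hpos), one_pow]
  · simp only [norm_pow, norm_div]
    refine lt_of_le_of_lt ?_ hN
    gcongr
    exact norm_le_iSup_of_isCompact hK hKΩ hf hy

lemma OHull_eq_of_convex (hK : IsCompact K) (hKΩ : K ⊆ Ω) (hc : Convex ℝ K) : OHull Ω K = K := by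
  refine Subset.antisymm (fun x hx => ?_) (subset_OHull hK hKΩ)
  by_contra hxK
  obtain ⟨L, u, hLu, hux⟩ := RCLike.geometric_hahn_banach_closed_point (𝕜 := ℂ) hc hK.isClosed hxK
  have norm_exp_le := norm_le_of_mem_OHull hx L.differentiable.cexp.differentiableOn
    (Real.exp_nonneg u) fun y hy => by
      rw [Complex.norm_exp]
      exact Real.exp_le_exp.2 (hLu y hy).le
  rw [Complex.norm_exp, Real.exp_le_exp] at norm_exp_le
  exact hux.not_ge norm_exp_le

lemma norm_one_sub_mul_add_mul_le_half {u v z : ℂ} {M : ℝ} (hM : 1 ≤ M) (hz : ‖z‖ ≤ 1 / (8 * M))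
    (hu : ‖u‖ ≤ 1 / 4) (hv : ‖v‖ ≤ M) : ‖(1 - z) * u + z * v‖ ≤ 1 / 2 := by
  have hz_le : ‖z‖ ≤ 1 / 8 := hz.trans (by gcongr; linarith)
  have one_sub_le : ‖1 - z‖ ≤ 9 / 8 := (norm_sub_le _ _).trans (by rw [norm_one]; linarith)
  calc ‖(1 - z) * u + z * v‖ ≤ ‖1 - z‖ * ‖u‖ + ‖z‖ * ‖v‖ := by
        simpa only [norm_mul] using norm_add_le ((1 - z) * u) (z * v)
    _ ≤ 9 / 8 * (1 / 4) + 1 / (8 * M) * M := by gcongr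
    _ ≤ 1 / 2 := by
        rw [show 1 / (8 * M) * M = 1 / 8 by field_simp]
        norm_num

/-- At a point outside `K ∪ L`, functions peaking there against `K` and `L` are glued with a
function separating `L` from `K`. -/
theorem OHull_union_eq_of_holomorphicallySeparated (hK : IsCompact K) (hKΩ : K ⊆ Ω)
    (hL : IsCompact L) (hLΩ : L ⊆ Ω) (hhullK : OHull Ω K = K) (hhullL : OHull Ω L = L)
    (hsep : HolomorphicallySeparated Ω K L) : OHull Ω (K ∪ L) = K ∪ L := by
  refine Subset.antisymm (fun p hp => ?_) (subset_OHull (hK.union hL) (union_subset hKΩ hLΩ))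
  by_contra hpKL
  rw [mem_union, not_or] at hpKL
  obtain ⟨f, hf, hfp, hfK⟩ := exists_apply_eq_one_and_forall_norm_lt hK hKΩ hp.1
    (hhullK.symm ▸ hpKL.1) (by norm_num : (0 : ℝ) < 1 / 4)
  obtain ⟨g, hg, hgp, hgL⟩ := exists_apply_eq_one_and_forall_norm_lt hL hLΩ hp.1
    (hhullL.symm ▸ hpKL.2) (by norm_num : (0 : ℝ) < 1 / 4)
  obtain ⟨Cf, hCf⟩ := hL.exists_bound_of_continuousOn (hf.continuousOn.mono hLΩ)
  obtain ⟨Cg, hCg⟩ := hK.exists_bound_of_continuousOn (hg.continuousOn.mono hKΩ)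
  obtain ⟨M, hM, hCfM, hCgM⟩ : ∃ M, 1 ≤ M ∧ Cf ≤ M ∧ Cg ≤ M :=
    ⟨max 1 (max Cf Cg), by simp, by simp, by simp⟩
  obtain ⟨e, he, heK, heL⟩ := hsep (1 / (8 * M)) (by positivity)
  have norm_le_half := norm_le_of_mem_OHull (f := fun x => (1 - e x) * f x + e x * g x) hp
    (((he.const_sub 1).mul hf).add (he.mul hg)) (by norm_num : (0 : ℝ) ≤ 1 / 2) ?_
  · rw [hfp, hgp, mul_one, mul_one, sub_add_cancel, norm_one] at norm_le_half
    norm_num at norm_le_half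
  rintro x (hx | hx)
  · exact norm_one_sub_mul_add_mul_le_half hM (heK x hx).le (hfK x hx).le ((hCg x hx).trans hCgM)
  · have hswap := norm_one_sub_mul_add_mul_le_half hM (z := 1 - e x)
      (norm_sub_rev (e x) 1 ▸ (heL x hx).le) (hgL x hx).le ((hCf x hx).trans hCfM)
    rwa [sub_sub_cancel, add_comm] at hswap

end HolomorphicHull

section ConvexHull

variable {E : Type*} [NormedAddCommGroup E] [NormedSpace ℝ E] {S U : Set E}

lemma closure_convexHull_subset_of_isOpen (hS : IsCompact S) (hU : IsOpen U) (hc : Convex ℝ U)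
    (hSU : S ⊆ U) : closure (convexHull ℝ S) ⊆ U := by
  obtain ⟨δ, hδ, hδU⟩ := hS.exists_thickening_subset_open hU hSU
  calc closure (convexHull ℝ S) ⊆ thickening δ (convexHull ℝ S) := closure_subset_thickening hδ _
    _ = convexHull ℝ (thickening δ S) := by
        rw [← add_ball_zero, ← add_ball_zero, convexHull_add, (convex_ball 0 δ).convexHull_eq]
    _ ⊆ U := convexHull_min hδU hc

lemma exists_isCompact_convex_between [CompleteSpace E] (hS : IsCompact S) (hU : IsOpen U)
    (hc : Convex ℝ U) (hSU : S ⊆ U) : ∃ T, IsCompact T ∧ Convex ℝ T ∧ S ⊆ T ∧ T ⊆ U :=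
  ⟨closure (convexHull ℝ S),
    hS.totallyBounded.convexHull.closure.isCompact_of_isClosed isClosed_closure,
    (convex_convexHull ℝ S).closure, (subset_convexHull ℝ S).trans subset_closure,
    closure_convexHull_subset_of_isOpen hS hU hc hSU⟩

end ConvexHull

section RoughSeparation

/-- The polynomial `3 z² - 2 z³`, for which `0` and `1` are superattracting fixed points. -/
def smoothstep (z : ℂ) : ℂ := 3 * z ^ 2 - 2 * z ^ 3

lemma differentiable_smoothstep : Differentiable ℂ smoothstep := by
  unfold smoothstep
  fun_prop

lemma smoothstep_iterate_one_sub (N : ℕ) (z : ℂ) : smoothstep^[N] (1 - z) = 1 - smoothstep^[N] z :=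
  (Function.Semiconj.iterate_right (f := fun z : ℂ => 1 - z)
    (fun z => by unfold smoothstep; ring) N z).symm

lemma norm_smoothstep_le {z : ℂ} (hz : ‖z‖ ≤ 1 / 8) : ‖smoothstep z‖ ≤ ‖z‖ * (1 / 2) := by
  have norm_factor_le : ‖3 - 2 * z‖ ≤ 4 := (norm_sub_le _ _).trans (by
    rw [norm_mul, Complex.norm_ofNat, Complex.norm_ofNat]
    linarith)
  calc ‖smoothstep z‖ = ‖z‖ * (‖z‖ * ‖3 - 2 * z‖) := by
        rw [← norm_mul, ← norm_mul, smoothstep]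
        ring_nf
    _ ≤ ‖z‖ * (1 / 8 * 4) := by gcongr
    _ = ‖z‖ * (1 / 2) := by norm_num

lemma norm_smoothstep_iterate_le {z : ℂ} (hz : ‖z‖ ≤ 1 / 8) (N : ℕ) :
    ‖smoothstep^[N] z‖ ≤ ‖z‖ * (1 / 2) ^ N := by
  induction N generalizing z with
  | zero => simp
  | succ N ih =>
    have hstep := norm_smoothstep_le hz
    calc ‖smoothstep^[N + 1] z‖ ≤ ‖smoothstep z‖ * (1 / 2) ^ N := ih (by linarith [norm_nonneg z])
      _ ≤ ‖z‖ * (1 / 2) * (1 / 2) ^ N := by gcongr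
      _ = ‖z‖ * (1 / 2) ^ (N + 1) := by rw [pow_succ', mul_assoc]

namespace HolomorphicallySeparated

variable {n : ℕ} {Ω K L : Set (CSpace n)}

theorem of_norm_le_one_eighth {g : CSpace n → ℂ} (hg : DifferentiableOn ℂ g Ω)
    (hgK : ∀ x ∈ K, ‖g x‖ ≤ 1 / 8) (hgL : ∀ x ∈ L, ‖g x - 1‖ ≤ 1 / 8) :
    HolomorphicallySeparated Ω K L := by
  intro ε hε
  obtain ⟨N, hN⟩ := exists_pow_lt_of_lt_one hε (by norm_num : (1 / 2 : ℝ) < 1)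
  have norm_iterate_lt {z : ℂ} (hz : ‖z‖ ≤ 1 / 8) : ‖smoothstep^[N] z‖ < ε :=
    ((norm_smoothstep_iterate_le hz N).trans
      (mul_le_of_le_one_left (by positivity) (by linarith))).trans_lt hN
  refine ⟨fun x => smoothstep^[N] (g x),
    (differentiable_smoothstep.iterate N).comp_differentiableOn hg,
    fun x hx => norm_iterate_lt (hgK x hx), fun x hx => ?_⟩
  rw [norm_sub_rev, ← smoothstep_iterate_one_sub]
  exact norm_iterate_lt (norm_sub_rev (g x) 1 ▸ hgL x hx)

lemma disjoint (h : HolomorphicallySeparated Ω K L) : Disjoint K L := by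
  refine disjoint_left.2 fun x hxK hxL => ?_
  obtain ⟨f, -, hfK, hfL⟩ := h (1 / 2) (by norm_num)
  have hone := norm_sub_le (f x) (f x - 1)
  rw [sub_sub_cancel, norm_one] at hone
  linarith [hfK x hxK, hfL x hxL]

lemma exists_approx (h : HolomorphicallySeparated Ω K L) (hK : IsCompact K) (hKΩ : K ⊆ Ω)
    (hL : IsCompact L) (hLΩ : L ⊆ Ω) {f g : CSpace n → ℂ} (hf : DifferentiableOn ℂ f Ω)
    (hg : DifferentiableOn ℂ g Ω) {ε : ℝ} (hε : 0 < ε) :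
    ∃ q : CSpace n → ℂ, DifferentiableOn ℂ q Ω ∧ (∀ x ∈ K, ‖q x - f x‖ < ε) ∧
      ∀ x ∈ L, ‖q x - g x‖ < ε := by
  obtain ⟨C, hC⟩ := (hK.union hL).exists_bound_of_continuousOn
    ((hg.sub hf).continuousOn.mono (union_subset hKΩ hLΩ))
  obtain ⟨e, he, heK, heL⟩ := h (ε / (|C| + 1)) (by positivity)
  have norm_mul_lt {x : CSpace n} (hx : x ∈ K ∪ L) {z : ℂ} (hz : ‖z‖ < ε / (|C| + 1)) :
      ‖z * (g x - f x)‖ < ε := by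
    have hle : ‖g x - f x‖ ≤ |C| + 1 := (hC x hx).trans (by linarith [le_abs_self C])
    calc ‖z * (g x - f x)‖ ≤ ‖z‖ * (|C| + 1) := by
          rw [norm_mul]
          gcongr
      _ < ε := (lt_div_iff₀ (by positivity)).1 hz
  refine ⟨fun x => f x + e x * (g x - f x), hf.add (he.mul (hg.sub hf)), fun x hx => ?_,
    fun x hx => ?_⟩
  · rw [add_sub_cancel_left]
    exact norm_mul_lt (Or.inl hx) (heK x hx)
  · rw [show f x + e x * (g x - f x) - g x = (e x - 1) * (g x - f x) by ring]
    exact norm_mul_lt (Or.inr hx) (heL x hx)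

end HolomorphicallySeparated

end RoughSeparation

section Automorphisms

variable {n : ℕ} {Ω : Set (CSpace n)} {τ σ : CSpace n → CSpace n}

/-- `τ` and `σ` restrict to mutually inverse holomorphic automorphisms of `Ω`. -/
structure AreInverseAutomorphisms (Ω : Set (CSpace n)) (τ σ : CSpace n → CSpace n) : Prop where
  differentiableOn : DifferentiableOn ℂ τ Ω
  differentiableOn_inv : DifferentiableOn ℂ σ Ω
  mapsTo : MapsTo τ Ω Ω
  mapsTo_inv : MapsTo σ Ω Ω
  leftInvOn : LeftInvOn σ τ Ω
  rightInvOn : RightInvOn σ τ Ω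

lemma leftInvOn_iterate {α : Type*} {s : Set α} {f g : α → α} (h : LeftInvOn g f s)
    (hf : MapsTo f s s) (j : ℕ) : LeftInvOn g^[j] f^[j] s := by
  induction j with
  | zero => exact fun _ _ => rfl
  | succ j ih =>
    intro x hx
    rw [Function.iterate_succ_apply, Function.iterate_succ_apply', h (hf.iterate j hx), ih hx]

namespace AreInverseAutomorphisms

lemma iterate (h : AreInverseAutomorphisms Ω τ σ) (j : ℕ) :
    AreInverseAutomorphisms Ω τ^[j] σ^[j] where
  differentiableOn := h.differentiableOn.iterate h.mapsTo j
  differentiableOn_inv := h.differentiableOn_inv.iterate h.mapsTo_inv j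
  mapsTo := h.mapsTo.iterate j
  mapsTo_inv := h.mapsTo_inv.iterate j
  leftInvOn := leftInvOn_iterate h.leftInvOn h.mapsTo j
  rightInvOn := leftInvOn_iterate h.rightInvOn h.mapsTo_inv j

lemma isCompact_image (h : AreInverseAutomorphisms Ω τ σ) {K : Set (CSpace n)} (hK : IsCompact K)
    (hKΩ : K ⊆ Ω) : IsCompact (τ '' K) :=
  hK.image_of_continuousOn (h.differentiableOn.continuousOn.mono hKΩ)

lemma image_subset (h : AreInverseAutomorphisms Ω τ σ) {K : Set (CSpace n)} (hKΩ : K ⊆ Ω) :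
    τ '' K ⊆ Ω :=
  (h.mapsTo.mono_left hKΩ).image_subset

lemma OHull_image_eq (h : AreInverseAutomorphisms Ω τ σ) {K : Set (CSpace n)} (hK : IsCompact K)
    (hKΩ : K ⊆ Ω) (hhull : OHull Ω K = K) : OHull Ω (τ '' K) = τ '' K := by
  refine Subset.antisymm (fun x hx => ?_)
    (subset_OHull (h.isCompact_image hK hKΩ) (h.image_subset hKΩ))
  have hσx : σ x ∈ OHull Ω K := by
    refine ⟨h.mapsTo_inv hx.1, fun f hf => norm_le_of_mem_OHull hx
      (hf.comp h.differentiableOn_inv h.mapsTo_inv) (Real.iSup_nonneg fun _ => norm_nonneg _) ?_⟩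
    rintro _ ⟨y, hy, rfl⟩
    rw [Function.comp_apply, h.leftInvOn (hKΩ hy)]
    exact norm_le_iSup_of_isCompact hK hKΩ hf hy
  exact ⟨σ x, hhull.subset hσx, h.rightInvOn hx.1⟩

end AreInverseAutomorphisms

end Automorphisms

section Universality

/-- Birkhoff's transitivity criterion. -/
theorem exists_dense_range_of_forall_inter_preimage_nonempty {ι X Y : Type*} [TopologicalSpace X]
    [BaireSpace X] [Nonempty X] [TopologicalSpace Y] [SecondCountableTopology Y] {Φ : ι → X → Y}
    (hΦ : ∀ i, Continuous (Φ i))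
    (htrans : ∀ U V, IsOpen U → IsOpen V → U.Nonempty → V.Nonempty →
      ∃ i, (U ∩ Φ i ⁻¹' V).Nonempty) :
    ∃ x, Dense (range fun i => Φ i x) := by
  obtain ⟨b, hbc, hbne, hb⟩ := TopologicalSpace.exists_countable_basis Y
  have hdense : Dense (⋂ V ∈ b, ⋃ i, Φ i ⁻¹' V) := by
    refine dense_biInter_of_isOpen (fun V hV => isOpen_iUnion fun i =>
      (hb.isOpen hV).preimage (hΦ i)) hbc fun V hV => dense_iff_inter_open.2 fun U hU hUne => ?_
    rw [inter_iUnion, nonempty_iUnion]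
    exact htrans U V hU (hb.isOpen hV) hUne
      (nonempty_iff_ne_empty.2 (ne_of_mem_of_not_mem hV hbne))
  obtain ⟨x, hx⟩ := hdense.nonempty
  refine ⟨x, hb.dense_iff.2 fun V hV _ => ?_⟩
  obtain ⟨i, hi⟩ := mem_iUnion.1 (mem_iInter₂.1 hx V hV)
  exact ⟨Φ i x, hi, i, rfl⟩

variable {n : ℕ} {Ω : Set (CSpace n)}

lemma isClosed_OFun (hΩ : IsOpen Ω) : IsClosed (OFun Ω) := by
  have := hΩ.isLocallyClosed.locallyCompactSpace
  refine isClosed_iff_clusterPt.2 fun f hf => ?_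
  have : (𝓝 f ⊓ 𝓟 (OFun Ω)).NeBot := hf
  let extension (g : C(Ω, ℂ)) : CSpace n → ℂ := Function.extend Subtype.val g 0
  have extension_apply (g : C(Ω, ℂ)) (x : Ω) : extension g x = g x :=
    Subtype.val_injective.extend_apply _ _ x
  have hlim : TendstoLocallyUniformlyOn extension (extension f) (𝓝 f ⊓ 𝓟 (OFun Ω)) Ω := by
    rw [tendstoLocallyUniformlyOn_iff_tendstoLocallyUniformly_comp_coe]
    simpa only [Function.comp_def, extension_apply, id_eq] using
      ContinuousMap.tendsto_iff_tendstoLocallyUniformly.1 (tendsto_id'.2 inf_le_left)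
  refine ⟨extension f, differentiableOn_of_tendstoLocallyUniformlyOn hΩ hlim ?_,
    fun x => (extension_apply f x).symm⟩
  filter_upwards [mem_inf_of_right (mem_principal_self _)] with g ⟨g', hg', hgg'⟩
  exact hg'.congr fun x hx => (extension_apply g ⟨x, hx⟩).trans (hgg' _)

lemma nhds_basis_compactConvergence {X : Type*} [TopologicalSpace X] (f : C(X, ℂ)) :
    (𝓝 f).HasBasis (fun p : Set X × ℝ => IsCompact p.1 ∧ 0 < p.2)
      fun p => {g | ∀ x ∈ p.1, ‖g x - f x‖ < p.2} := by
  simpa only [dist_eq_norm, mem_ofPred_eq] using nhds_basis_uniformity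
    (Metric.uniformity_basis_dist (α := ℂ)).compactConvergenceUniformity (x := f)

lemma exists_isCompact_of_mem_nhds {f : CSpace n → ℂ} {hf : DifferentiableOn ℂ f Ω}
    {U : Set (holomorphicSubalgebra Ω)} (hU : U ∈ 𝓝 (toHolomorphic f hf)) :
    ∃ K ⊆ Ω, IsCompact K ∧ ∃ ε > 0, ∀ g (hg : DifferentiableOn ℂ g Ω),
      (∀ x ∈ K, ‖g x - f x‖ < ε) → toHolomorphic g hg ∈ U := by
  obtain ⟨V, hV, hVU⟩ := (mem_nhds_induced Subtype.val _ U).1 hU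
  obtain ⟨⟨K, ε⟩, ⟨hK, hε⟩, hKV⟩ := (nhds_basis_compactConvergence _).mem_iff.1 hV
  exact ⟨Subtype.val '' K, Subtype.coe_image_subset Ω K, hK.image continuous_subtype_val, ε, hε,
    fun g hg h => hVU (hKV fun x hx => h x (mem_image_of_mem _ hx))⟩

lemma exists_eq_toHolomorphic (F : holomorphicSubalgebra Ω) : ∃ f hf, F = toHolomorphic f hf := by
  obtain ⟨f, hf, hFf⟩ := F.2
  exact ⟨f, hf, Subtype.ext (ContinuousMap.ext hFf)⟩

/-- The operator `F ↦ F ∘ φ` on `𝒪(Ω)`, for a holomorphic self-map `φ` of `Ω`. -/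
def compositionOperator {φ : CSpace n → CSpace n} (hφ : DifferentiableOn ℂ φ Ω)
    (hm : MapsTo φ Ω Ω) (F : holomorphicSubalgebra Ω) : holomorphicSubalgebra Ω :=
  ⟨F.1.comp ⟨hm.restrict, hφ.continuousOn.mapsToRestrict hm⟩, by
    obtain ⟨f, hf, hFf⟩ := F.2
    exact ⟨f ∘ φ, hf.comp hφ hm, fun x => hFf _⟩⟩

lemma continuous_compositionOperator {φ : CSpace n → CSpace n} (hφ : DifferentiableOn ℂ φ Ω)
    (hm : MapsTo φ Ω Ω) : Continuous (compositionOperator hφ hm) :=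
  ((ContinuousMap.continuous_precomp _).comp continuous_subtype_val).subtype_mk _

/-- The functions `F ∘ τʲ`, `j ≥ 1`, on `Ω`. -/
def compositionOrbit (Ω : Set (CSpace n)) (τ : CSpace n → CSpace n) (F : CSpace n → ℂ) :
    Set C(Ω, ℂ) :=
  {g | ∃ j : ℕ, 1 ≤ j ∧ ∀ x : Ω, g x = F (τ^[j] x)}

variable {τ σ : CSpace n → CSpace n}

lemma compositionOrbit_subset_OFun (hτ : DifferentiableOn ℂ τ Ω) (hm : MapsTo τ Ω Ω)
    {F : CSpace n → ℂ} (hF : DifferentiableOn ℂ F Ω) : compositionOrbit Ω τ F ⊆ OFun Ω := by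
  rintro g ⟨j, -, hg⟩
  exact ⟨F ∘ τ^[j], hF.comp (hτ.iterate hm j) (hm.iterate j), hg⟩

lemma exists_holomorphicallySeparated_iterate_image {F : CSpace n → ℂ}
    (hF : DifferentiableOn ℂ F Ω) (hdense : OFun Ω ⊆ closure (compositionOrbit Ω τ F))
    {K : Set (CSpace n)} (hK : IsCompact K) (hKΩ : K ⊆ Ω) :
    ∃ j, 1 ≤ j ∧ HolomorphicallySeparated Ω K (τ^[j] '' K) := by
  obtain ⟨C, hC⟩ := hK.exists_bound_of_continuousOn (hF.continuousOn.mono hKΩ)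
  obtain ⟨c, hc⟩ := NormedField.exists_lt_norm ℂ (8 * |C|)
  have hc_pos : 0 < ‖c‖ := (by positivity : 0 ≤ 8 * |C|).trans_lt hc
  have hK_preimage : IsCompact (Subtype.val ⁻¹' K : Set Ω) := by
    rwa [Subtype.isCompact_iff, Subtype.image_preimage_coe, inter_eq_right.2 hKΩ]
  obtain ⟨g, ⟨j, hj, hg⟩, hgc⟩ := mem_closure_iff_nhds_basis (nhds_basis_compactConvergence _) |>.1
    (hdense (toHolomorphic (fun _ => c) (differentiableOn_const c)).2) (_, ‖c‖ / 8)
    ⟨hK_preimage, by positivity⟩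
  refine ⟨j, hj, .of_norm_le_one_eighth (g := fun x => F x / c) (by fun_prop)
    (fun x hx => ?_) ?_⟩
  · rw [norm_div, div_le_iff₀ hc_pos]
    linarith [hC x hx, le_abs_self C]
  · rintro _ ⟨x, hx, rfl⟩
    rw [div_sub_one (norm_pos_iff.1 hc_pos), norm_div, div_le_iff₀ hc_pos, ← hg ⟨x, hKΩ hx⟩,
      one_div_mul_eq_div]
    exact (hgc ⟨x, hKΩ hx⟩ hx).le

namespace AreInverseAutomorphisms

theorem isGenTranslation_of_OFun_subset_closure (h : AreInverseAutomorphisms Ω τ σ)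
    {F : CSpace n → ℂ} (hF : DifferentiableOn ℂ F Ω)
    (hdense : OFun Ω ⊆ closure (compositionOrbit Ω τ F)) : IsGenTranslation Ω τ := by
  intro K hK hKΩ hhull
  obtain ⟨j, hj, hsep⟩ := exists_holomorphicallySeparated_iterate_image hF hdense hK hKΩ
  refine ⟨j, hj, hsep.disjoint.symm.inter_eq, ?_⟩
  rw [union_comm]
  exact OHull_union_eq_of_holomorphicallySeparated hK hKΩ ((h.iterate j).isCompact_image hK hKΩ)
    ((h.iterate j).image_subset hKΩ) hhull ((h.iterate j).OHull_image_eq hK hKΩ hhull) hsep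

variable (h : AreInverseAutomorphisms Ω τ σ) (hΩ : IsOpen Ω) (hc : Convex ℝ Ω)
  (hgen : IsGenTranslation Ω τ)
include h hΩ hc hgen

lemma exists_simultaneous_approx {f g : CSpace n → ℂ} (hf : DifferentiableOn ℂ f Ω)
    (hg : DifferentiableOn ℂ g Ω) {K : Set (CSpace n)} (hK : IsCompact K) (hKΩ : K ⊆ Ω) {ε : ℝ}
    (hε : 0 < ε) : ∃ j, 1 ≤ j ∧ ∃ q : CSpace n → ℂ, DifferentiableOn ℂ q Ω ∧
      (∀ x ∈ K, ‖q x - f x‖ < ε) ∧ ∀ x ∈ K, ‖q (τ^[j] x) - g x‖ < ε := by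
  obtain ⟨T, hT, hTc, hKT, hTΩ⟩ := exists_isCompact_convex_between hK hΩ hc hKΩ
  obtain ⟨j, hj, hdisj, hhull⟩ := hgen T hT hTΩ (OHull_eq_of_convex hT hTΩ hTc)
  have hj_aut := h.iterate j
  have hL := hj_aut.isCompact_image hT hTΩ
  have hLΩ := hj_aut.image_subset hTΩ
  have hsep := holomorphicallySeparated_of_OHull_union_eq hΩ hc hL hT
    (disjoint_iff_inter_eq_empty.2 hdisj) (union_subset hLΩ hTΩ) hhull
  obtain ⟨q, hq, hqL, hqT⟩ := hsep.exists_approx hL hLΩ hT hTΩ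
    (hg.comp hj_aut.differentiableOn_inv hj_aut.mapsTo_inv) hf hε
  refine ⟨j, hj, q, hq, fun x hx => hqT x (hKT hx), fun x hx => ?_⟩
  simpa only [Function.comp_apply, hj_aut.leftInvOn (hKΩ hx)] using
    hqL _ (mem_image_of_mem _ (hKT hx))

lemma exists_inter_preimage_compositionOperator_nonempty {U V : Set (holomorphicSubalgebra Ω)}
    (hU : IsOpen U) (hV : IsOpen V) (hUne : U.Nonempty) (hVne : V.Nonempty) :
    ∃ j : {j : ℕ // 1 ≤ j}, (U ∩ compositionOperator (h.iterate j).differentiableOn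
      (h.iterate j).mapsTo ⁻¹' V).Nonempty := by
  obtain ⟨F, hFU⟩ := hUne
  obtain ⟨G, hGV⟩ := hVne
  obtain ⟨f, hf, rfl⟩ := exists_eq_toHolomorphic F
  obtain ⟨g, hg, rfl⟩ := exists_eq_toHolomorphic G
  obtain ⟨K, hKΩ, hK, ε, hε, hKU⟩ := exists_isCompact_of_mem_nhds (hU.mem_nhds hFU)
  obtain ⟨L, hLΩ, hL, δ, hδ, hLV⟩ := exists_isCompact_of_mem_nhds (hV.mem_nhds hGV)
  obtain ⟨j, hj, q, hq, hqf, hqg⟩ := h.exists_simultaneous_approx hΩ hc hgen hf hg (hK.union hL)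
    (union_subset hKΩ hLΩ) (lt_min hε hδ)
  exact ⟨⟨j, hj⟩, toHolomorphic q hq,
    hKU q hq fun x hx => (hqf x (Or.inl hx)).trans_le (min_le_left ε δ),
    hLV (q ∘ τ^[j]) (hq.comp (h.iterate j).differentiableOn (h.iterate j).mapsTo)
      fun x hx => (hqg x (Or.inr hx)).trans_le (min_le_right ε δ)⟩

theorem exists_OFun_subset_closure_compositionOrbit :
    ∃ F : CSpace n → ℂ, DifferentiableOn ℂ F Ω ∧
      OFun Ω ⊆ closure (compositionOrbit Ω τ F) := by
  have := hΩ.isLocallyClosed.locallyCompactSpace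
  have := (isClosed_OFun hΩ).completeSpace_coe
  have : BaireSpace (holomorphicSubalgebra Ω) := inferInstanceAs (BaireSpace (OFun Ω))
  have : SecondCountableTopology (holomorphicSubalgebra Ω) :=
    inferInstanceAs (SecondCountableTopology (OFun Ω))
  obtain ⟨F, hF⟩ := exists_dense_range_of_forall_inter_preimage_nonempty
    (fun j : {j : ℕ // 1 ≤ j} => continuous_compositionOperator
      (h.iterate j).differentiableOn (h.iterate j).mapsTo)
    fun _ _ => h.exists_inter_preimage_compositionOperator_nonempty hΩ hc hgen
  obtain ⟨f, hf, rfl⟩ := exists_eq_toHolomorphic F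
  exact ⟨f, hf, fun g hg => map_mem_closure continuous_subtype_val (hF ⟨g, hg⟩)
    (forall_mem_range.2 fun j => ⟨j, j.2, fun _ => rfl⟩)⟩

end AreInverseAutomorphisms

end Universality

/-- For a convex domain `Ω ⊆ ℂⁿ` and an automorphism `τ` of `Ω`, there exists a
universal function `F ∈ 𝒪(Ω)` for `τ` iff `τ` is a generalized translation. -/
theorem stmt_13 {n : ℕ} (Ω : Set (CSpace n)) (hΩopen : IsOpen Ω) (hΩconv : Convex ℝ Ω)
    (hΩne : Ω.Nonempty)
    (τ : CSpace n → CSpace n) (hτdiff : DifferentiableOn ℂ τ Ω) (hτmaps : Set.MapsTo τ Ω Ω)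
    (hτbij : ∃ σ : CSpace n → CSpace n, DifferentiableOn ℂ σ Ω ∧ Set.MapsTo σ Ω Ω ∧
      (∀ x ∈ Ω, σ (τ x) = x) ∧ (∀ x ∈ Ω, τ (σ x) = x)) :
    (∃ F : CSpace n → ℂ, DifferentiableOn ℂ F Ω ∧
      {g : C(↥Ω, ℂ) | ∃ j : ℕ, 1 ≤ j ∧ ∀ x : ↥Ω, g x = F (τ^[j] ↑x)} ⊆ OFun Ω ∧
      OFun Ω ⊆
        closure {g : C(↥Ω, ℂ) | ∃ j : ℕ, 1 ≤ j ∧ ∀ x : ↥Ω, g x = F (τ^[j] ↑x)}) ↔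
    IsGenTranslation Ω τ := by
  obtain ⟨σ, hσdiff, hσmaps, hστ, hτσ⟩ := hτbij
  have hinv : AreInverseAutomorphisms Ω τ σ := ⟨hτdiff, hσdiff, hτmaps, hσmaps, hστ, hτσ⟩
  refine ⟨fun ⟨F, hF, _, hdense⟩ => hinv.isGenTranslation_of_OFun_subset_closure hF hdense,
    fun hgen => ?_⟩
  obtain ⟨F, hF, hdense⟩ := hinv.exists_OFun_subset_closure_compositionOrbit hΩopen hΩconv hgen
  exact ⟨F, hF, compositionOrbit_subset_OFun hτdiff hτmaps hF, hdense⟩
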